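/- arXiv:1903.12550 — 2 statements merged into one kernel-verified Lean document; each statement's English description precedes it below -/
import Mathlib

section
/- Let f: X → Y be a map of topological spaces inducing a bijection on path components, isomorphisms on π_i for 1 ≤ i ≤ k+1 at every basepoint (i.e. f is a (k+1)-equivalence), and let g: E₁ → E₂ be a map over a morphism of Serre fibrations p₁: E₁ ↠ B₁, p₂: E₂ ↠ B₂ with base map a (k+1)-equivalence and total map a k-equivalence. Then for every b₁ ∈ B₁ the induced map on fibers Fib(p₁,b₁) → Fib(p₂,f(b₁)) is a k-equivalence. -/
noncomputable section

namespace Paper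

open ContinuousMap

variable {X : Type*} {Y : Type*} [TopologicalSpace X] [TopologicalSpace Y]

/-- The map induced on path components by a continuous map. -/
def pi0Map (f : C(X, Y)) : ZerothHomotopy X → ZerothHomotopy Y :=
  Quotient.map f (fun _ _ h => ⟨h.somePath.map f.continuous⟩)

/-- Composition of a generalized loop with a continuous map. -/
def genLoopComp {N : Type*} (f : C(X, Y)) {x : X} (p : GenLoop N X x) : GenLoop N Y (f x) :=
  ⟨f.comp p.1, fun y hy => by
    have := p.2 y hy
    simp only [ContinuousMap.comp_apply]
    exact congrArg f this⟩

/-- The map induced on homotopy groups (and `π₀`) by a continuous map. -/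
def piMap (N : Type*) (f : C(X, Y)) (x : X) :
    HomotopyGroup N X x → HomotopyGroup N Y (f x) :=
  Quotient.map (genLoopComp f)
    (fun p q h => Nonempty.map (fun (H : p.1.HomotopyRel q.1 (Cube.boundary N)) =>
      H.compContinuousMap f) h)

/-- `f` is a `k`-equivalence: it is a continuous map which is bijective on path components,
induces isomorphisms on `π_i` for `1 ≤ i ≤ k`, and a surjection on `π_{k+1}`, for every
choice of basepoint. -/
def IsKEquivalence (k : ℕ) (f : X → Y) : Prop :=
  ∃ hf : Continuous f,
    Function.Bijective (pi0Map ⟨f, hf⟩) ∧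
    (∀ x : X, ∀ i : ℕ, 1 ≤ i → i ≤ k → Function.Bijective (piMap (Fin i) ⟨f, hf⟩ x)) ∧
    (∀ x : X, Function.Surjective (piMap (Fin (k + 1)) ⟨f, hf⟩ x))

/-- A space is `k`-connected iff the constant map to a point is a `k`-equivalence. -/
def ConnGE (k : ℕ) (Z : Type*) [TopologicalSpace Z] : Prop :=
  IsKEquivalence k (fun _ : Z => (() : Unit))

/-- A Serre fibration: the homotopy lifting property with respect to all cubes. -/
def IsSerreFibration {E B : Type*} [TopologicalSpace E] [TopologicalSpace B] (p : E → B) : Prop :=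
  Continuous p ∧
  ∀ n : ℕ, ∀ H : C((Fin n → unitInterval) × unitInterval, B), ∀ h₀ : C(Fin n → unitInterval, E),
    (∀ y, p (h₀ y) = H (y, 0)) →
    ∃ G : C((Fin n → unitInterval) × unitInterval, E),
      (∀ z, p (G z) = H z) ∧ (∀ y, G (y, 0) = h₀ y)

end Paper

open scoped unitInterval Topology.Homotopy

namespace Paper

/-- Prepend a coordinate to a cube point, as a continuous map. -/
def consMap (n : ℕ) : C(I × (Fin n → I), Fin (n + 1) → I) :=
  ⟨fun z => Fin.cons z.1 z.2, by
    refine continuous_pi fun i => ?_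
    refine Fin.cases ?_ (fun j => ?_) i
    · simpa using continuous_fst
    · simp only [Fin.cons_succ]
      fun_prop⟩

/-- Split off the first coordinate of a cube point, as a continuous map. -/
def unconsMap (n : ℕ) : C(Fin (n + 1) → I, I × (Fin n → I)) :=
  ⟨fun v => (v 0, Fin.tail v), by
    refine (continuous_apply 0).prodMk (continuous_pi fun i => ?_)
    exact continuous_apply (Fin.succ i)⟩

@[simp] theorem unconsMap_consMap (n : ℕ) (z : I × (Fin n → I)) :
    unconsMap n (consMap n z) = z := by
  ext <;> simp [unconsMap, consMap]

@[simp] theorem consMap_unconsMap (n : ℕ) (v : Fin (n + 1) → I) :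
    consMap n (unconsMap n v) = v := by
  simp [unconsMap, consMap]

theorem consMap_mem_boundary {n : ℕ} {t : I} {y : Fin n → I} :
    consMap n (t, y) ∈ Cube.boundary (Fin (n + 1)) ↔
      t = 0 ∨ t = 1 ∨ y ∈ Cube.boundary (Fin n) := by
  simp only [Cube.boundary, Set.mem_ofPred_eq, Fin.exists_fin_succ, consMap, ContinuousMap.coe_mk,
    Fin.cons_zero, Fin.cons_succ, or_assoc]

theorem mem_boundary_succ {n : ℕ} {v : Fin (n + 1) → I} :
    v ∈ Cube.boundary (Fin (n + 1)) ↔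
      (unconsMap n v).1 = 0 ∨ (unconsMap n v).1 = 1 ∨
        (unconsMap n v).2 ∈ Cube.boundary (Fin n) := by
  conv_lhs => rw [← consMap_unconsMap n v]
  exact consMap_mem_boundary

/-- centred coordinates in `[-1,1]`. -/
def cen {n : ℕ} (y : Fin n → I) : Fin n → ℝ := fun i => 2 * (y i : ℝ) - 1

theorem continuous_cen {n : ℕ} : Continuous (cen (n := n)) := by
  unfold cen; fun_prop

theorem norm_cen_le {n : ℕ} (y : Fin n → I) : ‖cen y‖ ≤ 1 := by
  rw [pi_norm_le_iff_of_nonneg zero_le_one]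
  intro i
  rw [Real.norm_eq_abs, abs_le]
  have h0 := (y i).2.1
  have h1 := (y i).2.2
  unfold cen
  constructor <;> linarith

/-- Time at which the outward flow hits the box. -/
def phiR {n : ℕ} (w : (Fin n → I) × I) : ℝ := min (w.2 : ℝ) (1 / max ‖cen w.1‖ (1/2) - 1)

theorem continuous_phiR {n : ℕ} : Continuous (phiR (n := n)) := by
  unfold phiR
  have := (continuous_cen (n := n))
  refine Continuous.min (by fun_prop) (Continuous.sub (Continuous.div (by fun_prop) (by fun_prop) ?_)
    (by fun_prop))
  intro x
  positivity

theorem phiR_nonneg {n : ℕ} (w : (Fin n → I) × I) : 0 ≤ phiR w := by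
  refine le_min w.2.2.1 ?_
  have : max ‖cen w.1‖ (1/2) ≤ 1 := max_le (norm_cen_le _) (by norm_num)
  have h2 : 0 < max ‖cen w.1‖ (1/2 : ℝ) := by positivity
  have := one_le_one_div h2 this
  linarith

theorem phiR_le {n : ℕ} (w : (Fin n → I) × I) : phiR w ≤ w.2 := min_le_left _ _

/-- The hitting time as a point in the interval. -/
def phi {n : ℕ} (w : (Fin n → I) × I) : I := ⟨phiR w, phiR_nonneg w, (phiR_le w).trans w.2.2.2⟩

theorem continuous_phi {n : ℕ} : Continuous (phi (n := n)) := continuous_phiR.subtype_mk _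

/-- Backward flow time. -/
def tau {n : ℕ} (z : ((Fin n → I) × I) × I) : ℝ := max (phiR z.1 - z.2) 0

/-- The deformation of the cylinder from the box. -/
def defo {n : ℕ} (z : ((Fin n → I) × I) × I) : (Fin n → I) × I :=
  (fun i => Set.projIcc 0 1 zero_le_one ((cen z.1.1 i * (1 + tau z) + 1) / 2),
    Set.projIcc 0 1 zero_le_one ((z.1.2 : ℝ) - tau z))

theorem continuous_defo {n : ℕ} : Continuous (defo (n := n)) := by
  have h1 := continuous_phiR (n := n)
  have h2 := continuous_cen (n := n)
  have h3 : Continuous (tau (n := n)) := by unfold tau; fun_prop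
  unfold defo
  refine Continuous.prodMk (continuous_pi fun i => continuous_projIcc.comp ?_)
    (continuous_projIcc.comp (by fun_prop))
  have : Continuous fun z : ((Fin n → I) × I) × I => cen z.1.1 i :=
    (continuous_apply i).comp (h2.comp (by fun_prop))
  fun_prop

theorem defo_phi {n : ℕ} (w : (Fin n → I) × I) : defo (w, phi w) = w := by
  have : tau (w, phi w) = 0 := by simp [tau, phi]
  obtain ⟨y, t⟩ := w
  unfold defo
  rw [this]
  ext i
  · have : (cen y i * (1 + 0) + 1) / 2 = (y i : ℝ) := by unfold cen; ring
    simp only [this, Set.projIcc_val]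
  · simp

/-- The open box. -/
def box (n : ℕ) : Set ((Fin n → I) × I) := {w | w.2 = 0 ∨ w.1 ∈ Cube.boundary (Fin n)}

theorem phi_of_mem_box {n : ℕ} {w : (Fin n → I) × I} (hw : w ∈ box n) : phi w = 0 := by
  apply Subtype.ext
  change phiR w = 0
  refine le_antisymm ?_ (phiR_nonneg w)
  rcases hw with h | ⟨i, hi⟩
  · exact (phiR_le w).trans (by simp [h])
  · refine (min_le_right _ _).trans ?_
    have h1 : |cen w.1 i| = 1 := by
      rcases hi with h | h
      · simp [cen, h]
      · simp [cen, h]; norm_num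
    have h2 : 1 ≤ ‖cen w.1‖ := by
      rw [← h1]; exact norm_le_pi_norm (cen w.1) i
    have h3 : max ‖cen w.1‖ (1/2) = 1 := by
      rw [le_antisymm (norm_cen_le _) h2]; norm_num
    rw [h3]; norm_num

theorem defo_zero_mem {n : ℕ} (w : (Fin n → I) × I) : defo (w, 0) ∈ box n := by
  have ht : tau (w, 0) = phiR w := by simp [tau, phiR_nonneg]
  by_cases h : (w.2 : ℝ) ≤ 1 / max ‖cen w.1‖ (1/2) - 1
  · left
    have : phiR w = w.2 := min_eq_left h
    simp [defo, ht, this]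
  · right
    push Not at h
    have hphi : phiR w = 1 / max ‖cen w.1‖ (1/2) - 1 := min_eq_right h.le
    have h2 : 0 < max ‖cen w.1‖ (1/2 : ℝ) := by positivity
    have hm : (1/2 : ℝ) < ‖cen w.1‖ := by
      by_contra hc
      push Not at hc
      rw [max_eq_right hc] at h
      have := w.2.2.2
      norm_num at h
      linarith
    rw [max_eq_left hm.le] at hphi
    have hpos : 0 < ‖cen w.1‖ := by linarith
    obtain ⟨i, hi⟩ : ∃ i, ‖cen w.1‖ ≤ |cen w.1 i| := by
      by_contra hc
      push Not at hc
      exact lt_irrefl _ ((pi_norm_lt_iff hpos).2 hc)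
    have hi' : |cen w.1 i| = ‖cen w.1‖ := le_antisymm (norm_le_pi_norm (cen w.1) i) hi
    refine ⟨i, ?_⟩
    have hτ : 1 + tau (w, 0) = 1 / ‖cen w.1‖ := by rw [ht, hphi]; ring
    simp only [defo, hτ]
    rcases abs_choice (cen w.1 i) with h | h
    · right
      rw [← hi', h]
      rw [h] at hi'
      have : cen w.1 i ≠ 0 := by rw [hi']; exact hpos.ne'
      have e : (cen w.1 i * (1 / cen w.1 i) + 1) / 2 = 1 := by field_simp; norm_num
      rw [e]; simp
    · left
      rw [← hi', h]
      rw [h] at hi'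
      have : cen w.1 i ≠ 0 := by intro h0; rw [h0] at hi'; simp at hi'; exact hpos.ne hi'
      have e : (cen w.1 i * (1 / -cen w.1 i) + 1) / 2 = 0 := by field_simp; norm_num
      rw [e]; simp

/-- Relative homotopy lifting for the pair (cube, boundary). -/
theorem rel_lift {E B : Type*} [TopologicalSpace E] [TopologicalSpace B] {p : E → B}
    (hp : IsSerreFibration p) (n : ℕ) (β : C((Fin n → I) × I, B)) (h : C((Fin n → I) × I, E))
    (hh : ∀ w ∈ box n, p (h w) = β w) :
    ∃ G : C((Fin n → I) × I, E), (∀ w, p (G w) = β w) ∧ ∀ w ∈ box n, G w = h w := by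
  let sw : C(Fin (n + 1) → I, (Fin n → I) × I) := ⟨fun v => (unconsMap n v).swap, by fun_prop⟩
  let ws : C((Fin n → I) × I, Fin (n + 1) → I) := ⟨fun v => consMap n v.swap, by fun_prop⟩
  have sws : ∀ w, sw (ws w) = w := by intro w; simp [sw, ws]
  let D : C(((Fin n → I) × I) × I, (Fin n → I) × I) := ⟨defo, continuous_defo⟩
  obtain ⟨G, hG1, hG2⟩ := hp.2 (n + 1)
    ⟨fun z => β (D (sw z.1, z.2)), by fun_prop⟩
    ⟨fun v => h (D (sw v, 0)), by fun_prop⟩ (fun y => hh _ (defo_zero_mem _))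
  have hc := continuous_phi (n := n)
  refine ⟨⟨fun w => G (ws w, phi w), by fun_prop⟩, fun w => ?_, fun w hw => ?_⟩
  · simp only [ContinuousMap.coe_mk, hG1, sws]
    exact congrArg β (defo_phi w)
  · simp only [ContinuousMap.coe_mk, phi_of_mem_box hw, hG2, sws]
    have := defo_phi w
    rw [phi_of_mem_box hw] at this
    exact congrArg h this

end Paper

namespace Paper

section Main

variable {E₁ B₁ E₂ B₂ : Type*} [TopologicalSpace E₁] [TopologicalSpace B₁]
    [TopologicalSpace E₂] [TopologicalSpace B₂]

/-- The main geometric step: deform `a` into the fibre, compatibly with the homotopy `H`. -/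
theorem main_lift {p₁ : E₁ → B₁} {p₂ : E₂ → B₂} (f : C(B₁, B₂)) (g : C(E₁, E₂))
    (hp₁ : IsSerreFibration p₁) (hp₂ : IsSerreFibration p₂)
    (hcomm : ∀ e, p₂ (g e) = f (p₁ e)) (b₁ : B₁) (n : ℕ)
    (a : C(Fin n → I, E₁)) (H : C(I × (Fin n → I), E₂))
    (K : C(I × (Fin n → I), B₁)) (L : C(I × I × (Fin n → I), B₂))
    (H0 : ∀ y, H (0, y) = g (a y))
    (Hb : ∀ t, ∀ y ∈ Cube.boundary (Fin n), H (t, y) = g (a y))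
    (K0 : ∀ y, K (0, y) = p₁ (a y)) (K1 : ∀ y, K (1, y) = b₁)
    (Kb : ∀ t, ∀ y ∈ Cube.boundary (Fin n), K (t, y) = b₁)
    (L0 : ∀ t y, L (0, t, y) = f (K (t, y))) (L1 : ∀ t y, L (1, t, y) = p₂ (H (t, y)))
    (Ls : ∀ s y, L (s, 0, y) = f (p₁ (a y))) (Lt : ∀ s y, L (s, 1, y) = f b₁)
    (Lb : ∀ s t, ∀ y ∈ Cube.boundary (Fin n), L (s, t, y) = f b₁) :
    ∃ a' : C(Fin n → I, E₁), (∀ y, p₁ (a' y) = b₁) ∧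
      (∀ y ∈ Cube.boundary (Fin n), a' y = a y) ∧
      ∃ M : C(I × (Fin n → I), E₂), (∀ z, p₂ (M z) = f b₁) ∧
        (∀ y, M (0, y) = g (a' y)) ∧ (∀ y, M (1, y) = H (1, y)) ∧
        (∀ s, ∀ y ∈ Cube.boundary (Fin n), M (s, y) = g (a y)) := by
  have ha : ∀ y ∈ Cube.boundary (Fin n), p₁ (a y) = b₁ := fun y hy => by
    rw [← K0, Kb _ _ hy]
  obtain ⟨K', hK', hK'b⟩ := rel_lift hp₁ n ⟨fun z => K (z.2, z.1), by fun_prop⟩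
    ⟨fun z => a z.1, by fun_prop⟩ (by
      rintro ⟨y, t⟩ (h | h)
      · simp only at h
        subst h
        simp [K0]
      · simp [Kb t y h, ha y h])
  simp only [ContinuousMap.coe_mk] at hK' hK'b
  have hK'0 : ∀ y, K' (y, 0) = a y := fun y => hK'b (y, 0) (Or.inl rfl)
  have hK'bd : ∀ t, ∀ y ∈ Cube.boundary (Fin n), K' (y, t) = a y :=
    fun t y hy => hK'b (y, t) (Or.inr hy)
  -- the glued partial lift
  let c1 : C(I, I) := ⟨fun s => Set.projIcc 0 1 zero_le_one (1 - 2 * (s : ℝ)),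
    continuous_projIcc.comp (by fun_prop)⟩
  let c2 : C(I, I) := ⟨fun s => Set.projIcc 0 1 zero_le_one (2 * (s : ℝ) - 1),
    continuous_projIcc.comp (by fun_prop)⟩
  have c1h : ∀ s : I, (s : ℝ) = 1 / 2 → c1 s = 0 := by
    intro s hs; simp [c1, hs]
  have c2h : ∀ s : I, (s : ℝ) = 1 / 2 → c2 s = 0 := by
    intro s hs; simp [c2, hs]
  have c10 : c1 0 = 1 := by simp [c1]
  have c21 : c2 1 = 1 := by
    simp [c2]
    norm_num
  let h : C((Fin (n + 1) → I) × I, E₂) :=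
    ⟨fun w => if ((w.1 0 : I) : ℝ) ≤ 1 / 2 then
        g (K' ((unconsMap n w.1).2, w.2 * c1 (w.1 0)))
      else H (w.2 * c2 (w.1 0), (unconsMap n w.1).2), by
      refine Continuous.if_le (by fun_prop) (by fun_prop) (by fun_prop) (by fun_prop) ?_
      intro w hw
      rw [c1h _ hw, c2h _ hw, mul_zero, hK'0, H0]⟩
  have hcons : ∀ s y t, h (consMap n (s, y), t) = if (s : ℝ) ≤ 1 / 2 then
        g (K' (y, t * c1 s)) else H (t * c2 s, y) := by
    intro s y t
    have : unconsMap n (consMap n (s, y)) = (s, y) := unconsMap_consMap n _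
    simp only [h, ContinuousMap.coe_mk, this]
    rfl
  have h_s0 : ∀ y t, h (consMap n (0, y), t) = g (K' (y, t)) := by
    intro y t; rw [hcons, c10]; simp
  have h_s1 : ∀ y t, h (consMap n (1, y), t) = H (t, y) := by
    intro y t; rw [hcons, c21]; norm_num
  have h_t0 : ∀ s y, h (consMap n (s, y), 0) = g (a y) := by
    intro s y; rw [hcons, zero_mul, zero_mul, hK'0, H0, ite_self]
  have h_bd : ∀ s t, ∀ y ∈ Cube.boundary (Fin n), h (consMap n (s, y), t) = g (a y) := by
    intro s t y hy; rw [hcons, hK'bd _ _ hy, Hb _ _ hy, ite_self]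
  obtain ⟨M, hM, hMb⟩ := rel_lift hp₂ (n + 1)
    ⟨fun w => L ((unconsMap n w.1).1, w.2, (unconsMap n w.1).2), by fun_prop⟩ h (by
      rintro ⟨v, t⟩ hv
      obtain ⟨⟨s, y⟩, rfl⟩ : ∃ z, consMap n z = v := ⟨_, consMap_unconsMap n v⟩
      simp only [ContinuousMap.coe_mk, unconsMap_consMap]
      rcases hv with hv | hv
      · simp only at hv
        subst hv
        rw [h_t0, Ls, hcomm]
      · rcases consMap_mem_boundary.1 hv with rfl | rfl | hy
        · rw [h_s0, L0, hcomm, hK']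
        · rw [h_s1, L1]
        · rw [h_bd _ _ _ hy, Lb _ _ _ hy, hcomm, ha y hy])
  refine ⟨⟨fun y => K' (y, 1), by fun_prop⟩, fun y => by simp [hK', K1],
    fun y hy => by simp [hK'bd _ y hy],
    ⟨fun z => M (consMap n z, 1), by fun_prop⟩, fun z => ?_, fun y => ?_, fun y => ?_,
    fun s y hy => ?_⟩
  · simp [hM, Lt]
  · have := hMb (consMap n (0, y), 1) (Or.inr (consMap_mem_boundary.2 (Or.inl rfl)))
    simp [this, h_s0]
  · have := hMb (consMap n (1, y), 1) (Or.inr (consMap_mem_boundary.2 (Or.inr (Or.inl rfl))))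
    simp [this, h_s1]
  · have := hMb (consMap n (s, y), 1) (Or.inr (consMap_mem_boundary.2 (Or.inr (Or.inr hy))))
    simp [this, h_bd _ _ _ hy]

end Main

end Paper

namespace Paper

section Loops

variable {X Y T : Type*} [TopologicalSpace X] [TopologicalSpace Y] [TopologicalSpace T]

/-- A parametrised family of loops, as a continuous map into the loop space. -/
def famLoop {n : ℕ} {x : X} (Q : C(T × (Fin n → I), X))
    (hQ : ∀ t, ∀ y ∈ Cube.boundary (Fin n), Q (t, y) = x) : C(T, GenLoop (Fin n) X x) :=
  ⟨fun t => ⟨Q.curry t, fun y hy => hQ t y hy⟩, Q.curry.continuous.subtype_mk _⟩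

theorem famLoop_apply {n : ℕ} {x : X} (Q : C(T × (Fin n → I), X))
    (hQ : ∀ t, ∀ y ∈ Cube.boundary (Fin n), Q (t, y) = x) (t : T) (y : Fin n → I) :
    famLoop Q hQ t y = Q (t, y) := rfl

/-- Post-composition on loop spaces is continuous. -/
def loopPost (n : ℕ) (f : C(X, Y)) (x : X) : C(GenLoop (Fin n) X x, GenLoop (Fin n) Y (f x)) :=
  ⟨genLoopComp f, by
    refine Continuous.subtype_mk ?_ _
    exact (ContinuousMap.continuous_postcomp f).comp continuous_subtype_val⟩

theorem genLoopComp_apply {N : Type*} (f : C(X, Y)) {x : X} (p : GenLoop N X x) (y : N → I) :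
    genLoopComp f p y = f (p y) := rfl

theorem loopPost_apply (n : ℕ) (f : C(X, Y)) (x : X) (p : GenLoop (Fin n) X x) (y : Fin n → I) :
    loopPost n f x p y = f (p y) := rfl

theorem loopPost_const (n : ℕ) (f : C(X, Y)) (x : X) :
    loopPost n f x GenLoop.const = GenLoop.const := rfl

/-- From a surjection on `π_{n+1}`, loops in the `n`-fold loop space lift up to homotopy. -/
theorem loop_surj {n : ℕ} (f : C(X, Y)) (x : X)
    (hs : Function.Surjective (piMap (Fin (n + 1)) f x))
    (γ : Path (GenLoop.const : GenLoop (Fin n) Y (f x)) GenLoop.const) :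
    ∃ ω : Path (GenLoop.const : GenLoop (Fin n) X x) GenLoop.const,
      Path.Homotopic (ω.map (loopPost n f x).continuous) γ := by
  let b : GenLoop (Fin (n + 1)) Y (f x) :=
    ⟨⟨fun v => γ (unconsMap n v).1 (unconsMap n v).2, by fun_prop⟩, by
      intro v hv
      simp only [ContinuousMap.coe_mk]
      rcases mem_boundary_succ.1 hv with h | h | h
      · rw [h, γ.source]; rfl
      · rw [h, γ.target]; rfl
      · exact GenLoop.boundary _ _ h⟩
  have hb : ∀ t y, b (consMap n (t, y)) = γ t y := by
    intro t y
    change γ (unconsMap n (consMap n (t, y))).1 (unconsMap n (consMap n (t, y))).2 = _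
    rw [unconsMap_consMap]
  obtain ⟨q, hq⟩ := hs (Quotient.mk _ b)
  induction q using Quotient.inductionOn with
  | h a =>
  have hq' : GenLoop.Homotopic (genLoopComp f a) b := Quotient.exact hq
  obtain ⟨P⟩ := hq'
  have bd0 : ∀ y, consMap n (0, y) ∈ Cube.boundary (Fin (n + 1)) :=
    fun y => consMap_mem_boundary.2 (Or.inl rfl)
  have bd1 : ∀ y, consMap n (1, y) ∈ Cube.boundary (Fin (n + 1)) :=
    fun y => consMap_mem_boundary.2 (Or.inr (Or.inl rfl))
  have bdy : ∀ t, ∀ y ∈ Cube.boundary (Fin n), consMap n (t, y) ∈ Cube.boundary (Fin (n + 1)) :=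
    fun t y hy => consMap_mem_boundary.2 (Or.inr (Or.inr hy))
  have Pbd : ∀ s, ∀ v ∈ Cube.boundary (Fin (n + 1)), P (s, v) = f x := fun s v hv => by
    rw [P.eq_snd s hv]; exact GenLoop.boundary b v hv
  let ω : Path (GenLoop.const : GenLoop (Fin n) X x) GenLoop.const :=
    ⟨famLoop ⟨fun z => a (consMap n z), by fun_prop⟩
      (fun t y hy => GenLoop.boundary a _ (bdy t y hy)),
      by ext y; exact GenLoop.boundary a _ (bd0 y), by ext y; exact GenLoop.boundary a _ (bd1 y)⟩
  refine ⟨ω, ⟨?_⟩⟩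
  refine
    { toContinuousMap := famLoop (T := I × I)
        ⟨fun z => P (z.1.1, consMap n (z.1.2, z.2)), by fun_prop⟩
        (fun t y hy => Pbd _ _ (bdy _ y hy))
      map_zero_left := ?_
      map_one_left := ?_
      prop' := ?_ }
  · intro t
    refine GenLoop.ext _ _ fun y => ?_
    exact P.apply_zero _
  · intro t
    refine GenLoop.ext _ _ fun y => ?_
    refine (P.apply_one _).trans ?_
    exact hb t y
  · intro s t ht
    refine GenLoop.ext _ _ fun y => ?_
    rcases ht with rfl | rfl
    · refine (Pbd s _ (bd0 y)).trans ?_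
      exact congrArg f (GenLoop.boundary a _ (bd0 y)).symm
    · refine (Pbd s _ (bd1 y)).trans ?_
      exact congrArg f (GenLoop.boundary a _ (bd1 y)).symm

theorem path_lift {P Q : Type*} [TopologicalSpace P] [TopologicalSpace Q] (F : C(P, Q)) (p c : P)
    (hs : ∀ γ : Path (F c) (F c), ∃ ω : Path c c, Path.Homotopic (ω.map F.continuous) γ)
    (hj : Joined p c) (H : Path (F p) (F c)) :
    ∃ K : Path p c, Path.Homotopic (K.map F.continuous) H := by
  obtain ⟨K0⟩ := hj
  obtain ⟨ω, hω⟩ := hs ((K0.map F.continuous).symm.trans H)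
  refine ⟨K0.trans ω, ?_⟩
  rw [Path.map_trans]
  refine ((Path.Homotopic.refl _).hcomp hω).trans ?_
  refine (Path.Homotopic.trans_assoc _ _ _).symm.trans ?_
  refine ((Path.Homotopic.trans_symm _).hcomp (Path.Homotopic.refl _)).trans ?_
  exact Path.Homotopic.refl_trans _

/-- Null-homotopies lift up to homotopy. -/
theorem null_lift {n : ℕ} (f : C(X, Y)) (x : X) (p : GenLoop (Fin n) X x)
    (hp : GenLoop.Homotopic p GenLoop.const)
    (hs : Function.Surjective (piMap (Fin (n + 1)) f x))
    (H : C(I × (Fin n → I), Y)) (H0 : ∀ y, H (0, y) = f (p y)) (H1 : ∀ y, H (1, y) = f x)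
    (Hb : ∀ t, ∀ y ∈ Cube.boundary (Fin n), H (t, y) = f x) :
    ∃ (K : C(I × (Fin n → I), X)) (L : C(I × I × (Fin n → I), Y)),
      (∀ y, K (0, y) = p y) ∧ (∀ y, K (1, y) = x) ∧
      (∀ t, ∀ y ∈ Cube.boundary (Fin n), K (t, y) = x) ∧
      (∀ t y, L (0, t, y) = f (K (t, y))) ∧ (∀ t y, L (1, t, y) = H (t, y)) ∧
      (∀ s y, L (s, 0, y) = f (p y)) ∧ (∀ s y, L (s, 1, y) = f x) ∧
      (∀ s t, ∀ y ∈ Cube.boundary (Fin n), L (s, t, y) = f x) := by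
  obtain ⟨P⟩ := hp
  have hj : Joined p GenLoop.const := by
    refine ⟨⟨famLoop P.toContinuousMap (fun t y hy => ?_), ?_, ?_⟩⟩
    · exact P.eq_snd t hy
    · ext y; exact P.apply_zero y
    · ext y; exact P.apply_one y
  obtain ⟨K, ⟨L⟩⟩ := path_lift (loopPost n f x) p GenLoop.const (loop_surj f x hs) hj
    ⟨famLoop H Hb, by ext y; exact H0 y, by ext y; exact H1 y⟩
  refine ⟨⟨fun z => K z.1 z.2, by fun_prop⟩, ⟨fun z => L (z.1, z.2.1) z.2.2, by fun_prop⟩,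
    fun y => ?_, fun y => ?_, fun t y hy => ?_, fun t y => ?_, fun t y => ?_, fun s y => ?_,
    fun s y => ?_, fun s t y hy => ?_⟩
  · simp
  · simp
  · exact GenLoop.boundary _ _ hy
  · change L (0, t) y = _
    rw [L.apply_zero]; rfl
  · change L (1, t) y = _
    rw [L.apply_one]; rfl
  · change L (s, 0) y = _
    rw [L.source]; rfl
  · change L (s, 1) y = _
    rw [L.target]; rfl
  · exact GenLoop.boundary _ _ hy

end Loops

end Paper

namespace Paper

section Final

variable {X Y : Type*} [TopologicalSpace X] [TopologicalSpace Y]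

/-- Null-homotopic images come from null-homotopic loops. -/
def NullInj (n : ℕ) (f : C(X, Y)) (x : X) : Prop :=
  ∀ p : GenLoop (Fin n) X x, GenLoop.Homotopic (genLoopComp f p) GenLoop.const →
    GenLoop.Homotopic p GenLoop.const

theorem not_mem_boundary_zero (y : Fin 0 → I) : y ∉ Cube.boundary (Fin 0) := by
  rintro ⟨i, _⟩; exact i.elim0

theorem homotopic_zero_iff {x : X} (p q : GenLoop (Fin 0) X x) :
    GenLoop.Homotopic p q ↔ Joined (p default) (q default) := by
  constructor
  · rintro ⟨P⟩
    exact ⟨⟨⟨fun t => P (t, default), by fun_prop⟩, P.apply_zero _, P.apply_one _⟩⟩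
  · rintro ⟨γ⟩
    refine ⟨{ toFun := fun z => γ z.1, map_zero_left := fun y => ?_, map_one_left := fun y => ?_,
              prop' := fun t y hy => (not_mem_boundary_zero y hy).elim }⟩
    · rw [Subsingleton.elim y default]; exact γ.source
    · rw [Subsingleton.elim y default]; exact γ.target

theorem pi0Map_injective_iff (f : C(X, Y)) :
    Function.Injective (pi0Map f) ↔ ∀ x x' : X, Joined (f x) (f x') → Joined x x' := by
  constructor
  · intro h x x' hj
    have : pi0Map f (Quotient.mk _ x) = pi0Map f (Quotient.mk _ x') := Quotient.sound hj
    exact Quotient.exact (h this)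
  · intro h a b
    refine Quotient.inductionOn₂ a b fun x x' hq => Quotient.sound (h x x' (Quotient.exact hq))

theorem pi0Map_surjective_iff (f : C(X, Y)) :
    Function.Surjective (pi0Map f) ↔ ∀ y : Y, ∃ x : X, Joined (f x) y := by
  constructor
  · intro h y
    obtain ⟨q, hq⟩ := h (Quotient.mk _ y)
    induction q using Quotient.inductionOn with
    | h x => exact ⟨x, Quotient.exact hq⟩
  · intro h q
    induction q using Quotient.inductionOn with
    | h y =>
      obtain ⟨x, hx⟩ := h y
      exact ⟨Quotient.mk _ x, Quotient.sound hx⟩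

theorem nullInj_of_isKEquivalence {m n : ℕ} {f : X → Y} (h : IsKEquivalence m f) (hn : n ≤ m)
    (hf : Continuous f) (x : X) : NullInj n ⟨f, hf⟩ x := by
  obtain ⟨_, h0, h1, -⟩ := h
  intro p hp
  rcases Nat.eq_zero_or_pos n with rfl | hpos
  · exact (homotopic_zero_iff _ _).2
      ((pi0Map_injective_iff _).1 h0.1 _ _ ((homotopic_zero_iff _ _).1 hp))
  · have : piMap (Fin n) ⟨f, hf⟩ x (Quotient.mk _ p)
        = piMap (Fin n) ⟨f, hf⟩ x (Quotient.mk _ GenLoop.const) := Quotient.sound hp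
    exact Quotient.exact ((h1 x n hpos hn).1 this)

theorem surj_of_isKEquivalence {m n : ℕ} {f : X → Y} (h : IsKEquivalence m f) (hn : n ≤ m)
    (hf : Continuous f) (x : X) : Function.Surjective (piMap (Fin (n + 1)) ⟨f, hf⟩ x) := by
  obtain ⟨_, -, h1, h2⟩ := h
  rcases Nat.lt_or_eq_of_le hn with h | rfl
  · exact (h1 x (n + 1) (by omega) (by omega)).2
  · exact h2 x

theorem genLoopComp_transAt {n : ℕ} (f : C(X, Y)) {x : X} (i : Fin n) (p q : GenLoop (Fin n) X x) :
    genLoopComp f (GenLoop.transAt i p q) =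
      GenLoop.transAt i (genLoopComp f p) (genLoopComp f q) := by
  refine GenLoop.ext _ _ fun y => ?_
  rw [genLoopComp_apply]
  simp only [GenLoop.transAt, GenLoop.coe_copy, genLoopComp_apply]
  split_ifs <;> rfl

theorem piMap_injective_of_nullInj {n : ℕ} (f : C(X, Y)) (x : X) (h : NullInj (n + 1) f x) :
    Function.Injective (piMap (Fin (n + 1)) f x) := by
  let φ : HomotopyGroup (Fin (n + 1)) X x →* HomotopyGroup (Fin (n + 1)) Y (f x) :=
    MonoidHom.mk' (piMap (Fin (n + 1)) f x) (by
      intro a b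
      refine Quotient.inductionOn₂ a b fun p q => ?_
      have e1 := HomotopyGroup.mul_spec (i := (0 : Fin (n + 1))) (p := p) (q := q)
      have e2 := HomotopyGroup.mul_spec (i := (0 : Fin (n + 1))) (p := genLoopComp f p)
        (q := genLoopComp f q)
      refine (congrArg (piMap (Fin (n + 1)) f x) e1).trans ?_
      refine Eq.trans ?_ e2.symm
      rw [← genLoopComp_transAt]
      rfl)
  change Function.Injective φ
  rw [injective_iff_map_eq_one]
  intro a
  refine Quotient.inductionOn a fun p hp => ?_
  exact Quotient.sound (h p (Quotient.exact hp))

variable {E₁ B₁ E₂ B₂ : Type*} [TopologicalSpace E₁] [TopologicalSpace B₁]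
    [TopologicalSpace E₂] [TopologicalSpace B₂]

/-- Core statement: compress a cube into the fibre. -/
theorem core {p₁ : E₁ → B₁} {p₂ : E₂ → B₂} (f : C(B₁, B₂)) (g : C(E₁, E₂))
    (hp₁ : IsSerreFibration p₁) (hp₂ : IsSerreFibration p₂)
    (hcomm : ∀ e, p₂ (g e) = f (p₁ e)) (b₁ : B₁) (n : ℕ)
    (hinj : NullInj n f b₁) (hs : Function.Surjective (piMap (Fin (n + 1)) f b₁))
    (a : C(Fin n → I, E₁)) (H : C(I × (Fin n → I), E₂))
    (ha : ∀ y ∈ Cube.boundary (Fin n), p₁ (a y) = b₁)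
    (H0 : ∀ y, H (0, y) = g (a y)) (H1 : ∀ y, p₂ (H (1, y)) = f b₁)
    (Hb : ∀ t, ∀ y ∈ Cube.boundary (Fin n), H (t, y) = g (a y)) :
    ∃ a' : C(Fin n → I, E₁), (∀ y, p₁ (a' y) = b₁) ∧
      (∀ y ∈ Cube.boundary (Fin n), a' y = a y) ∧
      ∃ M : C(I × (Fin n → I), E₂), (∀ z, p₂ (M z) = f b₁) ∧
        (∀ y, M (0, y) = g (a' y)) ∧ (∀ y, M (1, y) = H (1, y)) ∧
        (∀ s, ∀ y ∈ Cube.boundary (Fin n), M (s, y) = g (a y)) := by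
  have c1 := hp₁.1
  have c2 := hp₂.1
  let q : GenLoop (Fin n) B₁ b₁ := ⟨⟨fun y => p₁ (a y), by fun_prop⟩, ha⟩
  let H' : C(I × (Fin n → I), B₂) := ⟨fun z => p₂ (H z), by fun_prop⟩
  have H'b : ∀ t, ∀ y ∈ Cube.boundary (Fin n), H' (t, y) = f b₁ := fun t y hy => by
    change p₂ (H (t, y)) = _
    rw [Hb t y hy, hcomm, ha y hy]
  have H'0 : ∀ y, H' (0, y) = f (q y) := fun y => by
    change p₂ (H (0, y)) = _
    rw [H0, hcomm]; rfl
  have hq : GenLoop.Homotopic q GenLoop.const := by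
    refine hinj q ⟨{ toContinuousMap := H', map_zero_left := H'0, map_one_left := H1,
                     prop' := fun t y hy => ?_ }⟩
    refine (H'b t y hy).trans ?_
    exact congrArg f (ha y hy).symm
  obtain ⟨K, L, K0, K1, Kb, L0, L1, Ls, Lt, Lb⟩ := null_lift f b₁ q hq hs H' H'0 H1 H'b
  exact main_lift f g hp₁ hp₂ hcomm b₁ n a H K L H0 Hb K0 K1 Kb L0 L1 Ls Lt Lb

end Final

end Paper

open Paper

/-- Given a morphism of Serre fibrations whose base map is a
`(k+1)`-equivalence and whose total map is a `k`-equivalence, the induced map on the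
fibers over any point `b₁` of the base is a `k`-equivalence. -/
theorem fiber_map_is_kEquivalence
    {E₁ B₁ E₂ B₂ : Type*} [TopologicalSpace E₁] [TopologicalSpace B₁]
    [TopologicalSpace E₂] [TopologicalSpace B₂]
    (k : ℕ) (p₁ : E₁ → B₁) (p₂ : E₂ → B₂) (f : B₁ → B₂) (g : E₁ → E₂)
    (hp₁ : IsSerreFibration p₁) (hp₂ : IsSerreFibration p₂)
    (hcomm : ∀ e, p₂ (g e) = f (p₁ e))
    (hf : IsKEquivalence (k + 1) f) (hg : IsKEquivalence k g)
    (b₁ : B₁) :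
    IsKEquivalence k (fun e : {e : E₁ // p₁ e = b₁} =>
      (⟨g e.1, by rw [hcomm, e.2]⟩ : {e : E₂ // p₂ e = f b₁})) := by
  have hgc : Continuous g := hg.1
  have hfc : Continuous f := hf.1
  have hFc : Continuous (fun e : {e : E₁ // p₁ e = b₁} =>
      (⟨g e.1, by rw [hcomm, e.2]⟩ : {e : E₂ // p₂ e = f b₁})) :=
    (hgc.comp continuous_subtype_val).subtype_mk _
  let f' : C(B₁, B₂) := ⟨f, hfc⟩
  let g' : C(E₁, E₂) := ⟨g, hgc⟩
  let F : C({e : E₁ // p₁ e = b₁}, {e : E₂ // p₂ e = f b₁}) := ⟨_, hFc⟩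
  have hcore := fun (n : ℕ) (hn : n ≤ k + 1) => core f' g' hp₁ hp₂ hcomm b₁ n
    (nullInj_of_isKEquivalence hf hn hfc b₁) (surj_of_isKEquivalence hf hn hfc b₁)
  have hnull : ∀ n ≤ k, ∀ e, NullInj n F e := by
    intro n hn e p hp
    obtain ⟨P⟩ := hp
    have Pb : ∀ t, ∀ y ∈ Cube.boundary (Fin n), P (t, y) = F e := fun t y hy => P.eq_snd t hy
    have P0 : ∀ y, P (0, y) = F (p y) := fun y => P.apply_zero y
    have P1 : ∀ y, P (1, y) = F e := fun y => P.apply_one y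
    let q : GenLoop (Fin n) E₁ e.1 :=
      ⟨⟨fun y => (p y).1, by fun_prop⟩, fun y hy => congrArg Subtype.val (GenLoop.boundary p y hy)⟩
    let H : C(I × (Fin n → I), E₂) := ⟨fun z => (P z).1, by fun_prop⟩
    have H0 : ∀ y, H (0, y) = g' (q y) := fun y => congrArg Subtype.val (P0 y)
    have H1 : ∀ y, H (1, y) = g' e.1 := fun y => congrArg Subtype.val (P1 y)
    have Hb : ∀ t, ∀ y ∈ Cube.boundary (Fin n), H (t, y) = g' e.1 :=
      fun t y hy => congrArg Subtype.val (Pb t y hy)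
    have hq : GenLoop.Homotopic q GenLoop.const := by
      refine nullInj_of_isKEquivalence hg hn hgc e.1 q
        ⟨{ toContinuousMap := H, map_zero_left := H0, map_one_left := H1,
           prop' := fun t y hy => ?_ }⟩
      exact (Hb t y hy).trans (congrArg g' (GenLoop.boundary q y hy).symm)
    obtain ⟨K, L, K0, K1, Kb, L0, L1, Ls, Lt, Lb⟩ := null_lift g' e.1 q hq
      (surj_of_isKEquivalence hg hn hgc e.1) H H0 H1 Hb
    have Kbd : ∀ v ∈ Cube.boundary (Fin (n + 1)), p₁ (K (unconsMap n v)) = b₁ := by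
      intro v hv
      obtain ⟨⟨s, y⟩, rfl⟩ : ∃ z, consMap n z = v := ⟨_, consMap_unconsMap n v⟩
      rw [unconsMap_consMap]
      rcases consMap_mem_boundary.1 hv with rfl | rfl | hy
      · rw [K0]; exact (p y).2
      · rw [K1]; exact e.2
      · rw [Kb _ _ hy]; exact e.2
    obtain ⟨a, ha1, ha2, -⟩ := hcore (n + 1) (by omega)
      ⟨fun v => K (unconsMap n v), by fun_prop⟩
      ⟨fun z => L (z.1, unconsMap n z.2), by fun_prop⟩ Kbd
      (fun v => L0 _ _)
      (fun v => by
        simp only [ContinuousMap.coe_mk]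
        refine (congrArg p₂ (L1 _ _)).trans ?_
        exact (P (unconsMap n v)).2)
      (fun t v hv => by
        obtain ⟨⟨s, y⟩, rfl⟩ : ∃ z, consMap n z = v := ⟨_, consMap_unconsMap n v⟩
        simp only [ContinuousMap.coe_mk, unconsMap_consMap]
        rcases consMap_mem_boundary.1 hv with rfl | rfl | hy
        · rw [Ls, K0]
        · rw [Lt, K1]
        · rw [Lb _ _ _ hy, Kb _ _ hy])
    have ha3 : ∀ s y, (s = 0 ∨ s = 1 ∨ y ∈ Cube.boundary (Fin n)) →
        a (consMap n (s, y)) = K (s, y) := by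
      intro s y h
      rw [ha2 _ (consMap_mem_boundary.2 h)]
      simp
    refine ⟨{ toFun := fun z => ⟨a (consMap n z), ha1 _⟩, continuous_toFun := ?_,
              map_zero_left := fun y => ?_, map_one_left := fun y => ?_,
              prop' := fun t y hy => ?_ }⟩
    · exact Continuous.subtype_mk (by fun_prop) _
    · apply Subtype.ext
      exact (ha3 0 y (Or.inl rfl)).trans (K0 y)
    · apply Subtype.ext
      exact (ha3 1 y (Or.inr (Or.inl rfl))).trans (K1 y)
    · apply Subtype.ext
      refine (ha3 t y (Or.inr (Or.inr hy))).trans ((Kb t y hy).trans ?_)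
      exact (GenLoop.boundary q y hy).symm
  have hsurj : ∀ n ≤ k, ∀ e, Function.Surjective (piMap (Fin (n + 1)) F e) := by
    intro n hn e c
    induction c using Quotient.inductionOn with
    | h b =>
    let b' : GenLoop (Fin (n + 1)) E₂ (g' e.1) :=
      ⟨⟨fun y => (b y).1, by fun_prop⟩, fun y hy => congrArg Subtype.val (GenLoop.boundary b y hy)⟩
    obtain ⟨c, hc⟩ := surj_of_isKEquivalence hg hn hgc e.1 (Quotient.mk _ b')
    induction c using Quotient.inductionOn with
    | h a =>
    have hab : GenLoop.Homotopic (genLoopComp g' a) b' := Quotient.exact hc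
    obtain ⟨P⟩ := hab
    obtain ⟨a', ha1, ha2, M, hM, M0, M1, Mb⟩ := hcore (n + 1) (by omega) a.1 P.toContinuousMap
      (fun y hy => (congrArg p₁ (GenLoop.boundary a y hy)).trans e.2)
      (fun y => P.apply_zero y)
      (fun y => (congrArg p₂ (P.apply_one y)).trans (b y).2)
      (fun t y hy => P.eq_fst t hy)
    refine ⟨Quotient.mk _ ⟨⟨fun y => ⟨a' y, ha1 y⟩, by fun_prop⟩, fun y hy => ?_⟩,
      Quotient.sound ⟨{ toFun := fun z => ⟨M z, hM z⟩, continuous_toFun := ?_,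
                        map_zero_left := fun y => ?_, map_one_left := fun y => ?_,
                        prop' := fun t y hy => ?_ }⟩⟩
    · apply Subtype.ext
      exact (ha2 y hy).trans (GenLoop.boundary a y hy)
    · exact Continuous.subtype_mk (by fun_prop) _
    · exact Subtype.ext (M0 y)
    · exact Subtype.ext ((M1 y).trans (P.apply_one y))
    · apply Subtype.ext
      exact (Mb t y hy).trans (congrArg g' (ha2 y hy).symm)
  refine ⟨hFc, ⟨?_, ?_⟩, ?_, hsurj k le_rfl⟩
  · rw [pi0Map_injective_iff]
    intro e e' hj
    let p : GenLoop (Fin 0) {e : E₁ // p₁ e = b₁} e' :=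
      ⟨ContinuousMap.const _ e, fun y hy => (not_mem_boundary_zero y hy).elim⟩
    have := hnull 0 (Nat.zero_le _) e' p ((homotopic_zero_iff (x := F e') _ _).2 hj)
    exact (homotopic_zero_iff (x := e') _ _).1 this
  · rw [pi0Map_surjective_iff]
    intro e₂
    obtain ⟨e₁, ⟨γ⟩⟩ := (pi0Map_surjective_iff g').1 hg.2.1.2 e₂.1
    obtain ⟨a', ha1, -, M, hM, M0, M1, -⟩ := hcore 0 (Nat.zero_le _) (ContinuousMap.const _ e₁)
      ⟨fun z => γ z.1, by fun_prop⟩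
      (fun y hy => (not_mem_boundary_zero y hy).elim)
      (fun y => γ.source)
      (fun y => (congrArg p₂ γ.target).trans e₂.2)
      (fun t y hy => (not_mem_boundary_zero y hy).elim)
    refine ⟨⟨a' default, ha1 _⟩, ⟨⟨⟨fun t => ⟨M (t, default), hM _⟩, ?_⟩, ?_, ?_⟩⟩⟩
    · exact Continuous.subtype_mk (by fun_prop) _
    · exact Subtype.ext (M0 _)
    · exact Subtype.ext ((M1 _).trans γ.target)
  · intro e i hi hik
    obtain ⟨n, rfl⟩ : ∃ n, i = n + 1 := ⟨i - 1, by omega⟩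
    exact ⟨piMap_injective_of_nullInj F e (hnull (n + 1) hik e), hsurj n (by omega) e⟩
end
end

section
/- Let U, V be orthogonal representations of a finite group G. The square comparing τ (concatenation with the identity, turning maps fixing {0,∞} pointwise-to-∞ into maps fixing {0,∞}) with smashing by S^V commutes up to homotopy: (−) ∧ S^V ∘ τ ≃ τ ∘ (−) ∧ S^V as maps map^G(S^U,S^U; π_B^A) → map^G(S^{U+V},S^{U+V}; id_B), where B = {0,∞} ⊆ S^U and A = {∞}. Moreover the horizontal maps τ are homotopy equivalences. -/
noncomputable section

namespace Paper

/-- The pinch-concatenation `τ(f) = id + f` on the one-point compactification of a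
normed space: the open unit ball is stretched onto the whole sphere `S^U` by the identity,
and the outside of the ball is mapped by `f` precomposed with `u ↦ (1 - 1/‖u‖)·u`. -/
def tauFun {U : Type} [NormedAddCommGroup U] [NormedSpace ℝ U]
    (f : OnePoint U → OnePoint U) : OnePoint U → OnePoint U := fun p =>
  Option.elim p OnePoint.infty fun u =>
    if ‖u‖ < 1 then OnePoint.some ((1 - ‖u‖)⁻¹ • u)
    else f (OnePoint.some ((1 - ‖u‖⁻¹) • u))

/-- The smash extension `f ∧ S^V` of a pointed self-map of `S^U`, under
`S^U ∧ S^V ≅ S^{U⊕V}`: it sends `u + v` to `f(u) + v`. -/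
def smashFun {U V : Type} [NormedAddCommGroup U] [NormedAddCommGroup V]
    (f : OnePoint U → OnePoint U) : OnePoint (U × V) → OnePoint (U × V) := fun p =>
  Option.elim p OnePoint.infty fun uv =>
    Option.elim (f (OnePoint.some uv.1)) OnePoint.infty fun u' => OnePoint.some (u', uv.2)

/-- The space `map^G(S^U, S^U; id_B)` of equivariant self maps fixing `0` and `∞`. -/
def MapId (G U : Type) [Group G] [NormedAddCommGroup U] [MulAction G U] : Type :=
  {F : C(OnePoint U, OnePoint U) //
    (∀ (g : G) (p : OnePoint U),
      F (OnePoint.map (fun u => g • u) p) = OnePoint.map (fun u => g • u) (F p)) ∧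
    F (OnePoint.some 0) = OnePoint.some 0 ∧ F OnePoint.infty = OnePoint.infty}

instance (G U : Type) [Group G] [NormedAddCommGroup U] [MulAction G U] :
    TopologicalSpace (MapId G U) :=
  inferInstanceAs (TopologicalSpace {_F : C(OnePoint U, OnePoint U) // _})

/-- The space `map^G(S^U, S^U; π_B^A)` of equivariant self maps sending both `0` and `∞`
to `∞`. -/
def MapPi (G U : Type) [Group G] [NormedAddCommGroup U] [MulAction G U] : Type :=
  {F : C(OnePoint U, OnePoint U) //
    (∀ (g : G) (p : OnePoint U),
      F (OnePoint.map (fun u => g • u) p) = OnePoint.map (fun u => g • u) (F p)) ∧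
    F (OnePoint.some 0) = OnePoint.infty ∧ F OnePoint.infty = OnePoint.infty}

instance (G U : Type) [Group G] [NormedAddCommGroup U] [MulAction G U] :
    TopologicalSpace (MapPi G U) :=
  inferInstanceAs (TopologicalSpace {_F : C(OnePoint U, OnePoint U) // _})

end Paper

open Paper

set_option linter.unusedSectionVars false

namespace PaperAux

open Filter Topology

/-- Action on the one-point compactification. -/
abbrev act {G W : Type} [SMul G W] (g : G) (p : OnePoint W) : OnePoint W :=
  OnePoint.map (fun u => g • u) p

/-- The radial coordinate with values in `[0,1]`. -/
def rad {W : Type} [NormedAddCommGroup W] (p : OnePoint W) : ℝ :=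
  Option.elim p 1 fun w => ‖w‖ / (1 + ‖w‖)

section basics

variable {W : Type} [NormedAddCommGroup W]

lemma rad_infty : rad (OnePoint.infty : OnePoint W) = 1 := rfl

lemma rad_some (w : W) : rad (OnePoint.some w) = ‖w‖ / (1 + ‖w‖) := rfl

lemma rad_zero : rad (OnePoint.some (0 : W)) = 0 := by simp [rad_some]

lemma rad_some_eq (w : W) : rad (OnePoint.some w) = 1 - (1 + ‖w‖)⁻¹ := by
  have : 0 < 1 + ‖w‖ := by positivity
  rw [rad_some]; field_simp; ring

lemma rad_some_lt (w : W) : rad (OnePoint.some w) < 1 := by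
  have : 0 < (1 + ‖w‖)⁻¹ := by positivity
  rw [rad_some_eq]; linarith

lemma rad_nonneg (p : OnePoint W) : 0 ≤ rad p := by
  induction p using OnePoint.rec with
  | infty => simp [rad_infty]
  | coe w => rw [rad_some]; positivity

lemma rad_le_one (p : OnePoint W) : rad p ≤ 1 := by
  induction p using OnePoint.rec with
  | infty => simp [rad_infty]
  | coe w => exact (rad_some_lt w).le

lemma rad_eq_one {p : OnePoint W} : rad p = 1 ↔ p = OnePoint.infty := by
  induction p using OnePoint.rec with
  | infty => simp [rad_infty]
  | coe w => simpa using (rad_some_lt w).ne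

lemma rad_eq_zero {p : OnePoint W} : rad p = 0 ↔ p = OnePoint.some 0 := by
  induction p using OnePoint.rec with
  | infty => simp [rad_infty]
  | coe w =>
    have : 0 < 1 + ‖w‖ := by positivity
    rw [rad_some, div_eq_zero_iff]
    simp [this.ne']

lemma rad_mono {W' : Type} [NormedAddCommGroup W'] {w : W} {w' : W'} (h : ‖w‖ ≤ ‖w'‖) :
    rad (OnePoint.some w) ≤ rad (OnePoint.some w') := by
  rw [rad_some_eq, rad_some_eq]
  gcongr

lemma tendsto_one_sub_inv : Tendsto (fun x : ℝ => 1 - (1 + x)⁻¹) atTop (𝓝 1) := by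
  have h : Tendsto (fun x : ℝ => (1 + x)⁻¹) atTop (𝓝 0) :=
    tendsto_inv_atTop_zero.comp (tendsto_atTop_add_const_left _ _ tendsto_id)
  simpa using h.const_sub 1

lemma continuous_rad [ProperSpace W] : Continuous (rad : OnePoint W → ℝ) := by
  rw [continuous_iff_continuousAt]
  intro p
  induction p using OnePoint.rec with
  | infty =>
    rw [OnePoint.continuousAt_infty', coclosedCompact_eq_cocompact]
    have h := tendsto_one_sub_inv.comp (tendsto_norm_cocompact_atTop (E := W))
    refine h.congr fun w => ?_
    exact (rad_some_eq w).symm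
  | coe w =>
    rw [OnePoint.continuousAt_coe]
    have : Continuous fun w : W => ‖w‖ / (1 + ‖w‖) := by
      refine continuous_norm.div (by fun_prop) fun x => ?_
      positivity
    exact this.continuousAt

lemma tendsto_infty [ProperSpace W] {ι : Type*} {l : Filter ι} {f : ι → OnePoint W}
    (h : Tendsto (fun i => rad (f i)) l (𝓝 1)) : Tendsto f l (𝓝 OnePoint.infty) := by
  have h1 := (continuous_rad (W := W)).isClosedMap.comap_nhds_eq continuous_rad 1
  have h2 : (rad : OnePoint W → ℝ) ⁻¹' {1} = {OnePoint.infty} := by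
    ext p; simp [rad_eq_one]
  rw [h2, nhdsSet_singleton] at h1
  rw [← h1]
  exact tendsto_comap_iff.2 h

lemma tendsto_zero [ProperSpace W] {ι : Type*} {l : Filter ι} {f : ι → OnePoint W}
    (h : Tendsto (fun i => rad (f i)) l (𝓝 0)) : Tendsto f l (𝓝 (OnePoint.some 0)) := by
  have h1 := (continuous_rad (W := W)).isClosedMap.comap_nhds_eq continuous_rad 0
  have h2 : (rad : OnePoint W → ℝ) ⁻¹' {0} = {OnePoint.some 0} := by
    ext p; simp [rad_eq_zero]
  rw [h2, nhdsSet_singleton] at h1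
  rw [← h1]
  exact tendsto_comap_iff.2 h

lemma tendsto_infty_of_le [ProperSpace W] {ι : Type*} {l : Filter ι} {f : ι → OnePoint W}
    {b : ι → ℝ} (hb : Tendsto b l (𝓝 1)) (h : ∀ᶠ i in l, b i ≤ rad (f i)) :
    Tendsto f l (𝓝 OnePoint.infty) :=
  tendsto_infty (tendsto_of_tendsto_of_tendsto_of_le_of_le' hb tendsto_const_nhds h
    (Eventually.of_forall fun _ => rad_le_one _))

/-- A point is degenerate if it is `0` or `∞`; the polar map `R s p` is the point in
direction `p` with radial coordinate `s`. -/
def R [NormedSpace ℝ W] (s : ℝ) (p : OnePoint W) : OnePoint W :=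
  open Classical in
  if s ≤ 0 then OnePoint.some 0
  else if 1 ≤ s then OnePoint.infty
  else if p = OnePoint.infty ∨ p = OnePoint.some 0 then
    (if s < 1 / 2 then OnePoint.some 0 else OnePoint.infty)
  else Option.elim p OnePoint.infty fun w => OnePoint.some ((s / (1 - s) * ‖w‖⁻¹) • w)

variable [NormedSpace ℝ W]

lemma R_zero {s : ℝ} (hs : s ≤ 0) (p : OnePoint W) : R s p = OnePoint.some 0 := by
  simp [R, hs]

lemma R_one {s : ℝ} (hs : 1 ≤ s) (p : OnePoint W) : R s p = OnePoint.infty := by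
  have : ¬ s ≤ 0 := by linarith
  simp [R, hs, this]

lemma R_some {s : ℝ} (h0 : 0 < s) (h1 : s < 1) {w : W} (hw : w ≠ 0) :
    R s (OnePoint.some w) = OnePoint.some ((s / (1 - s) * ‖w‖⁻¹) • w) := by
  simp [R, h0.not_ge, h1.not_ge, hw]
  rfl

lemma R_deg {s : ℝ} (h0 : 0 < s) (h1 : s < 1) {p : OnePoint W}
    (hp : p = OnePoint.infty ∨ p = OnePoint.some 0) :
    R s p = if s < 1 / 2 then OnePoint.some 0 else OnePoint.infty := by
  simp [R, h0.not_ge, h1.not_ge, hp]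

lemma deg_cases (p : OnePoint W) :
    (p = OnePoint.infty ∨ p = OnePoint.some 0) ∨ ∃ w : W, w ≠ 0 ∧ p = OnePoint.some w := by
  induction p using OnePoint.rec with
  | infty => simp
  | coe w =>
    by_cases hw : w = 0
    · simp [hw]
    · exact Or.inr ⟨w, hw, rfl⟩

lemma norm_R {s : ℝ} (h0 : 0 < s) (h1 : s < 1) {w : W} (hw : w ≠ 0) :
    ‖(s / (1 - s) * ‖w‖⁻¹) • w‖ = s / (1 - s) := by
  have : 0 < 1 - s := by linarith
  have hw' : ‖w‖ ≠ 0 := by simpa using hw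
  rw [norm_smul, Real.norm_of_nonneg (by positivity)]
  field_simp

lemma rad_R {s : ℝ} (h0 : 0 ≤ s) (h1 : s ≤ 1) {p : OnePoint W}
    (hp : s = 0 ∨ s = 1 ∨ ∃ w : W, w ≠ 0 ∧ p = OnePoint.some w) : rad (R s p) = s := by
  rcases h0.eq_or_lt with h0 | h0
  · subst h0; rw [R_zero le_rfl, rad_zero]
  rcases h1.eq_or_lt with h1 | h1
  · subst h1; rw [R_one le_rfl, rad_infty]
  rcases hp with rfl | rfl | ⟨w, hw, rfl⟩
  · exact absurd h0 (lt_irrefl _)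
  · exact absurd h1 (lt_irrefl _)
  rw [R_some h0 h1 hw, rad_some, norm_R h0 h1 hw]
  have : 0 < 1 - s := by linarith
  field_simp
  ring

lemma rad_R_bounds (s : ℝ) (p : OnePoint W) :
    rad (R s p) ≤ 2 * max s 0 ∧ 1 - 2 * max (1 - s) 0 ≤ rad (R s p) := by
  have m1 := le_max_left s 0
  have m2 := le_max_left (1 - s) 0
  have m3 := le_max_right s 0
  have m4 := le_max_right (1 - s) 0
  by_cases h0 : s ≤ 0
  · rw [R_zero h0, rad_zero]; constructor <;> linarith
  by_cases h1 : 1 ≤ s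
  · rw [R_one h1, rad_infty]; constructor <;> linarith
  push Not at h0 h1
  rcases deg_cases p with hp | hp
  · rw [R_deg h0 h1 hp]
    split_ifs with h
    · rw [rad_zero]; constructor <;> linarith
    · rw [rad_infty]; constructor <;> linarith
  · rw [rad_R h0.le h1.le (Or.inr (Or.inr hp))]; constructor <;> linarith

lemma R_rad (p : OnePoint W) : R (rad p) p = p := by
  rcases deg_cases p with (rfl | rfl) | ⟨w, hw, rfl⟩
  · rw [rad_infty, R_one le_rfl]
  · rw [rad_zero, R_zero le_rfl]
  · have hw' : 0 < ‖w‖ := by simpa using hw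
    have h0 : 0 < rad (OnePoint.some w) := by rw [rad_some]; positivity
    rw [R_some h0 (rad_some_lt w) hw]
    have : rad (OnePoint.some w) / (1 - rad (OnePoint.some w)) * ‖w‖⁻¹ = 1 := by
      have h2 : 0 < 1 + ‖w‖ := by positivity
      rw [rad_some_eq]
      field_simp
      ring
    rw [this, one_smul]

lemma R_R {s b : ℝ} {p : OnePoint W} (h : (0 < b ∧ b < 1) ∨ s ≤ 0 ∨ 1 ≤ s) :
    R s (R b p) = R s p := by
  by_cases h0 : s ≤ 0
  · rw [R_zero h0, R_zero h0]
  by_cases h1 : 1 ≤ s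
  · rw [R_one h1, R_one h1]
  have h : 0 < b ∧ b < 1 := by tauto
  obtain ⟨hb0, hb1⟩ := h
  push Not at h0 h1
  rcases deg_cases p with hp | ⟨w, hw, rfl⟩
  · rw [R_deg h0 h1 hp, R_deg h0 h1]
    rw [R_deg hb0 hb1 hp]
    split_ifs <;> simp
  · have hb : 0 < 1 - b := by linarith
    have hw' : 0 < ‖w‖ := by simpa using hw
    have hne : (b / (1 - b) * ‖w‖⁻¹) ≠ 0 := by positivity
    rw [R_some hb0 hb1 hw, R_some h0 h1 (smul_ne_zero hne hw), R_some h0 h1 hw,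
      norm_R hb0 hb1 hw, smul_smul]
    congr 2
    field_simp

lemma continuousAt_R [ProperSpace W] {s : ℝ} {p : OnePoint W}
    (h : s ≤ 0 ∨ 1 ≤ s ∨ ∃ w : W, w ≠ 0 ∧ p = OnePoint.some w) :
    ContinuousAt (fun x : ℝ × OnePoint W => R x.1 x.2) (s, p) := by
  by_cases h0 : s ≤ 0
  · unfold ContinuousAt
    simp only [R_zero h0]
    apply tendsto_zero
    have hc : Continuous fun x : ℝ × OnePoint W => 2 * max x.1 0 := by fun_prop
    have := hc.tendsto (s, p)
    simp only [max_eq_right h0, mul_zero] at this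
    exact squeeze_zero (fun x => rad_nonneg _) (fun x => (rad_R_bounds x.1 x.2).1) this
  by_cases h1 : 1 ≤ s
  · unfold ContinuousAt
    simp only [R_one h1]
    have hc : Continuous fun x : ℝ × OnePoint W => 1 - 2 * max (1 - x.1) 0 := by fun_prop
    have := hc.tendsto (s, p)
    simp only [max_eq_right (sub_nonpos.2 h1), mul_zero, sub_zero] at this
    exact tendsto_infty_of_le this (Eventually.of_forall fun x => (rad_R_bounds x.1 x.2).2)
  obtain ⟨w, hw, rfl⟩ : ∃ w : W, w ≠ 0 ∧ p = OnePoint.some w := by tauto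
  push Not at h0 h1
  have he : IsOpenEmbedding (Prod.map id OnePoint.some : ℝ × W → ℝ × OnePoint W) :=
    IsOpenEmbedding.id.prodMap OnePoint.isOpenEmbedding_coe
  have := (he.continuousAt_iff (g := fun x : ℝ × OnePoint W => R x.1 x.2) (x := (s, w)))
  refine this.1 ?_
  have hev : ∀ᶠ x : ℝ × W in 𝓝 (s, w), 0 < x.1 ∧ x.1 < 1 ∧ x.2 ≠ 0 := by
    refine IsOpen.mem_nhds ?_ ⟨h0, h1, hw⟩
    exact (isOpen_lt continuous_const continuous_fst).inter
      ((isOpen_lt continuous_fst continuous_const).inter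
      (isOpen_ne_fun continuous_snd continuous_const))
  have hc : ContinuousAt (fun x : ℝ × W => (OnePoint.some ((x.1 / (1 - x.1) * ‖x.2‖⁻¹) • x.2)
      : OnePoint W)) (s, w) := by
    refine OnePoint.continuous_coe.continuousAt.comp ?_
    have h2 : (1 : ℝ) - s ≠ 0 := by linarith
    have h3 : ‖w‖ ≠ 0 := by simpa using hw
    refine ContinuousAt.smul (ContinuousAt.mul (ContinuousAt.div ?_ ?_ h2)
      (ContinuousAt.inv₀ ?_ h3)) ?_ <;> fun_prop
  refine hc.congr ?_
  filter_upwards [hev] with x hx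
  exact (R_some hx.1 hx.2.1 hx.2.2).symm

lemma continuous_R_comp [ProperSpace W] {Q : Type*} [TopologicalSpace Q] {φ : Q → ℝ → ℝ}
    (hφ : Continuous fun x : Q × ℝ => φ x.1 x.2)
    (h0 : ∀ q, φ q 0 ≤ 0 ∨ 1 ≤ φ q 0) (h1 : ∀ q, φ q 1 ≤ 0 ∨ 1 ≤ φ q 1) :
    Continuous fun x : Q × OnePoint W => R (φ x.1 (rad x.2)) x.2 := by
  rw [continuous_iff_continuousAt]
  rintro ⟨q, p⟩
  have hc : Continuous fun x : Q × OnePoint W => (φ x.1 (rad x.2), x.2) := by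
    have := continuous_rad (W := W)
    have h2 : Continuous fun x : Q × OnePoint W => (x.1, rad x.2) := by fun_prop
    exact (hφ.comp h2).prodMk continuous_snd
  have hR : ContinuousAt (fun x : ℝ × OnePoint W => R x.1 x.2) (φ q (rad p), p) := by
    apply continuousAt_R
    rcases deg_cases p with (rfl | rfl) | hp
    · rw [rad_infty]; have := h1 q; tauto
    · rw [rad_zero]; have := h0 q; tauto
    · exact Or.inr (Or.inr hp)
  exact ContinuousAt.comp (f := fun x : Q × OnePoint W => (φ x.1 (rad x.2), x.2))
    (x := (q, p)) hR hc.continuousAt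

end basics

/-- The hypotheses on the action that are used. -/
structure Good (G W : Type) [Group G] [NormedAddCommGroup W] [NormedSpace ℝ W]
    [MulAction G W] : Prop where
  smul : ∀ (g : G) (c : ℝ) (w : W), g • (c • w) = c • (g • w)
  norm : ∀ (g : G) (w : W), ‖g • w‖ = ‖w‖

section equivariance

variable {G W : Type} [Group G] [NormedAddCommGroup W] [NormedSpace ℝ W] [MulAction G W]

lemma Good.zero (hG : Good G W) (g : G) : g • (0 : W) = 0 := by
  have := hG.norm g 0
  simpa using this

lemma Good.rad (hG : Good G W) (g : G) (p : OnePoint W) : rad (act g p) = rad p := by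
  induction p using OnePoint.rec with
  | infty => rfl
  | coe w => simp [rad_some, hG.norm]

lemma Good.R (hG : Good G W) (g : G) (s : ℝ) (p : OnePoint W) :
    R s (act g p) = act g (R s p) := by
  have z : act g (OnePoint.some (0 : W)) = OnePoint.some 0 := by simp [hG.zero]
  have i : act g (OnePoint.infty : OnePoint W) = OnePoint.infty := rfl
  by_cases h0 : s ≤ 0
  · rw [R_zero h0, R_zero h0, z]
  by_cases h1 : 1 ≤ s
  · rw [R_one h1, R_one h1]; rfl
  push Not at h0 h1
  rcases deg_cases p with hp | ⟨w, hw, rfl⟩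
  · have hp' : act g p = OnePoint.infty ∨ act g p = OnePoint.some 0 := by
      rcases hp with rfl | rfl
      · exact Or.inl i
      · exact Or.inr z
    rw [R_deg h0 h1 hp', R_deg h0 h1 hp]
    split_ifs
    · exact z.symm
    · exact i.symm
  · have hw' : g • w ≠ 0 := by
      intro h
      apply hw
      rw [← norm_eq_zero, ← hG.norm g, h, norm_zero]
    rw [R_some h0 h1 hw]
    simp only [act, OnePoint.map_some]
    rw [R_some h0 h1 hw', hG.norm, hG.smul]

end equivariance

end PaperAux

namespace PaperAux

open Filter Topology

section mapping

/-- Common generalization of `MapId` and `MapPi`. -/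
abbrev MapE (G W : Type) [Group G] [NormedAddCommGroup W] [MulAction G W] (p0 : OnePoint W) : Type :=
  {F : C(OnePoint W, OnePoint W) //
    (∀ (g : G) (p : OnePoint W),
      F (OnePoint.map (fun u => g • u) p) = OnePoint.map (fun u => g • u) (F p)) ∧
    F (OnePoint.some 0) = p0 ∧ F OnePoint.infty = OnePoint.infty}

variable {G W : Type} [Group G] [NormedAddCommGroup W] [MulAction G W]

lemma lift {Q : Type*} [TopologicalSpace Q] (p1 : OnePoint W) (h : Q → OnePoint W → OnePoint W)
    (hc : Continuous fun x : Q × OnePoint W => h x.1 x.2)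
    (he : ∀ q (g : G) p, h q (act g p) = act g (h q p))
    (h0 : ∀ q, h q (OnePoint.some 0) = p1) (h1 : ∀ q, h q OnePoint.infty = OnePoint.infty) :
    ∃ H : C(Q, MapE G W p1), ∀ q p, (H q).1 p = h q p := by
  let c := ContinuousMap.curry (⟨fun x : Q × OnePoint W => h x.1 x.2, hc⟩ : C(Q × OnePoint W, _))
  exact ⟨⟨fun q => ⟨c q, fun g p => he q g p, h0 q, h1 q⟩,
    Continuous.subtype_mk c.continuous _⟩, fun q p => rfl⟩

lemma continuous_evalE [ProperSpace W] (p0 : OnePoint W) :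
    Continuous fun x : MapE G W p0 × OnePoint W => x.1.1 x.2 := by
  have h : Continuous fun x : MapE G W p0 × OnePoint W => (x.1.1, x.2) :=
    (continuous_subtype_val.comp continuous_fst).prodMk continuous_snd
  exact (continuous_eval (F := C(OnePoint W, OnePoint W))).comp h

lemma MapE.ext' {p0 : OnePoint W} {F F' : MapE G W p0} (h : ∀ p, F.1 p = F'.1 p) : F = F' :=
  Subtype.ext (ContinuousMap.ext h)

lemma mapE_infty {p0 : OnePoint W} (F : MapE G W p0) : F.1 OnePoint.infty = OnePoint.infty :=
  F.2.2.2

lemma mapE_zero {p0 : OnePoint W} (F : MapE G W p0) : F.1 (OnePoint.some 0) = p0 :=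
  F.2.2.1

/-- A scalar that represents the endpoint `p`: nonpositive for `0`, at least one for `∞`. -/
def Ends (x : ℝ) (p : OnePoint W) : Prop :=
  (x ≤ 0 ∧ p = OnePoint.some 0) ∨ (1 ≤ x ∧ p = OnePoint.infty)

variable [NormedSpace ℝ W]

lemma Ends.R {x : ℝ} {p : OnePoint W} (h : Ends x p) (q : OnePoint W) : R x q = p := by
  rcases h with ⟨h, rfl⟩ | ⟨h, rfl⟩
  · exact R_zero h _
  · exact R_one h _

lemma Ends.or {x : ℝ} {p : OnePoint W} (h : Ends x p) : x ≤ 0 ∨ 1 ≤ x := by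
  rcases h with ⟨h, _⟩ | ⟨h, _⟩ <;> tauto

/-- Concatenation of the reparametrized identity and a reparametrized map. -/
lemma conc [ProperSpace W] (hG : Good G W) {P : Type*} [TopologicalSpace P]
    (p0 p1 : OnePoint W) (c : ℝ) (hc0 : 0 < c) (hc1 : c < 1) (α β : P → ℝ → ℝ)
    (hα : Continuous fun x : P × ℝ => α x.1 x.2) (hβ : Continuous fun x : P × ℝ => β x.1 x.2)
    (hα0 : ∀ s, Ends (α s 0) p1) (hαc : ∀ s, Ends (α s c) p0) (hα1 : ∀ s, α s 1 ≤ 0 ∨ 1 ≤ α s 1)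
    (hβ0 : ∀ s, β s 0 ≤ 0) (hβc : ∀ s, β s c ≤ 0) (hβ1 : ∀ s, 1 ≤ β s 1) :
    ∃ H : C(P × MapE G W p0, MapE G W p1), ∀ s F p,
      (H (s, F)).1 p = if rad p ≤ c then R (α s (rad p)) p else F.1 (R (β s (rad p)) p) := by
  refine Exists.imp (fun H hH s F p => hH (s, F) p) (lift (G := G) (Q := P × MapE G W p0) p1
    (fun q p => if rad p ≤ c then R (α q.1 (rad p)) p else q.2.1 (R (β q.1 (rad p)) p))
    ?_ ?_ ?_ ?_)
  · have hr := continuous_rad (W := W)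
    refine Continuous.if_le ?_ ?_ (hr.comp continuous_snd) continuous_const ?_
    · have h := continuous_R_comp (W := W) hα (fun s => (hα0 s).or) hα1
      exact h.comp ((continuous_fst.comp continuous_fst).prodMk continuous_snd)
    · have h := continuous_R_comp (W := W) hβ (fun s => Or.inl (hβ0 s)) (fun s => Or.inr (hβ1 s))
      have h2 : Continuous fun x : (P × MapE G W p0) × OnePoint W =>
          (x.1.2, R (β x.1.1 (rad x.2)) x.2) :=
        (continuous_snd.comp continuous_fst).prodMk
          (h.comp ((continuous_fst.comp continuous_fst).prodMk continuous_snd))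
      exact (continuous_evalE p0).comp h2
    · rintro ⟨⟨s, F⟩, p⟩ h
      simp only at h ⊢
      rw [h, (hαc s).R, R_zero (hβc s), mapE_zero F]
  · rintro ⟨s, F⟩ g p
    simp only [hG.rad, hG.R]
    split_ifs
    · rfl
    · exact F.2.1 g _
  · rintro ⟨s, F⟩
    simp only [rad_zero, if_pos hc0.le]
    exact (hα0 s).R _
  · rintro ⟨s, F⟩
    simp only [rad_infty, if_neg hc1.not_ge, R_one (hβ1 s)]
    exact mapE_infty F

/-- Reparametrization. -/
lemma repar [ProperSpace W] (hG : Good G W) {P : Type*} [TopologicalSpace P]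
    (p0 : OnePoint W) (β : P → ℝ → ℝ)
    (hβ : Continuous fun x : P × ℝ => β x.1 x.2)
    (hβ0 : ∀ s, β s 0 ≤ 0) (hβ1 : ∀ s, 1 ≤ β s 1) :
    ∃ H : C(P × MapE G W p0, MapE G W p0), ∀ s F p,
      (H (s, F)).1 p = F.1 (R (β s (rad p)) p) := by
  refine Exists.imp (fun H hH s F p => hH (s, F) p) (lift (G := G) (Q := P × MapE G W p0) p0
    (fun q p => q.2.1 (R (β q.1 (rad p)) p)) ?_ ?_ ?_ ?_)
  · have h := continuous_R_comp (W := W) hβ (fun s => Or.inl (hβ0 s)) (fun s => Or.inr (hβ1 s))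
    have h2 : Continuous fun x : (P × MapE G W p0) × OnePoint W =>
        (x.1.2, R (β x.1.1 (rad x.2)) x.2) :=
      (continuous_snd.comp continuous_fst).prodMk
        (h.comp ((continuous_fst.comp continuous_fst).prodMk continuous_snd))
    exact (continuous_evalE p0).comp h2
  · rintro ⟨s, F⟩ g p
    simp only [hG.rad, hG.R]
    exact F.2.1 g _
  · rintro ⟨s, F⟩
    simp only [rad_zero, R_zero (hβ0 s)]
    exact mapE_zero F
  · rintro ⟨s, F⟩
    simp only [rad_infty, R_one (hβ1 s)]
    exact mapE_infty F

/-- A map obtained by inserting a null-homotopic loop and reparametrizing is homotopic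
to the identity. -/
lemma homotopic_id [ProperSpace W] (hG : Good G W) (e : ℝ) (p0 : OnePoint W)
    (hp : Ends e p0)
    (c : ℝ) (hc0 : 0 < c) (hc1 : c < 1) (α β : ℝ → ℝ)
    (hα : Continuous α) (hβ : Continuous β)
    (hα0 : Ends (α 0) p0) (hαc : Ends (α c) p0) (hα1 : Ends (α 1) p0)
    (hβ0 : ∀ x ≤ c, β x ≤ 0) (hβ1 : 1 ≤ β 1)
    (S : C(MapE G W p0, MapE G W p0))
    (hS : ∀ F p, (S F).1 p = if rad p ≤ c then R (α (rad p)) p else F.1 (R (β (rad p)) p)) :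
    ContinuousMap.Homotopic S (ContinuousMap.id _) := by
  have key : ∀ x : ℝ, Ends x p0 → ∀ s : unitInterval, Ends ((1 - s.1) * x + s.1 * e) p0 := by
    intro x hx s
    have s0 := s.2.1
    have s1 := s.2.2
    rcases hx with ⟨hx, hx'⟩ | ⟨hx, hx'⟩
    · rcases hp with ⟨hp, _⟩ | ⟨_, hp⟩
      · exact Or.inl ⟨by nlinarith, hx'⟩
      · rw [hp] at hx'; exact absurd hx' (by simp)
    · rcases hp with ⟨_, hp⟩ | ⟨hp, _⟩
      · rw [hp] at hx'; exact absurd hx' (by simp)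
      · exact Or.inr ⟨by nlinarith, hx'⟩
  obtain ⟨H, hH⟩ := conc hG (P := unitInterval) p0 p0 c hc0 hc1
    (fun s x => (1 - s.1) * α x + s.1 * e) (fun _ x => β x) (by fun_prop) (by fun_prop)
    (fun s => key _ hα0 s) (fun s => key _ hαc s) (fun s => (key _ hα1 s).or)
    (fun _ => hβ0 0 hc0.le) (fun _ => hβ0 c le_rfl) (fun _ => hβ1)
  obtain ⟨K, hK⟩ := repar hG (P := unitInterval) p0
    (fun s x => (1 - s.1) * β x + s.1 * x) (by fun_prop)
    (fun s => by
      have := hβ0 0 hc0.le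
      have s1 := s.2.2
      nlinarith)
    (fun s => by
      have s0 := s.2.1
      have s1 := s.2.2
      nlinarith)
  have hmid : ∀ F, H (1, F) = K (0, F) := by
    intro F
    apply MapE.ext'
    intro p
    rw [hH, hK]
    simp only [Set.Icc.coe_one, Set.Icc.coe_zero, sub_self, zero_mul, one_mul, zero_add,
      sub_zero, add_zero]
    split_ifs with h
    · rw [hp.R, R_zero (hβ0 _ h), mapE_zero F]
    · rfl
  have h1 : ContinuousMap.Homotopic S (K.comp ((ContinuousMap.const _ 0).prodMk
      (ContinuousMap.id _))) := by
    refine ⟨⟨H, ?_, ?_⟩⟩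
    · intro F
      apply MapE.ext'
      intro p
      change (H (0, F)).1 p = _
      rw [hH, hS]
      simp
    · intro F
      exact hmid F
  refine h1.trans ⟨⟨K, fun F => rfl, ?_⟩⟩
  intro F
  apply MapE.ext'
  intro p
  change (K (1, F)).1 p = F.1 p
  rw [hK]
  simp [R_rad]

/-- reparametrization of the first half -/
def aa (t : ℝ) : ℝ := t / max (1 - t) (1 / 2)

/-- reparametrization of the second half -/
def bb (t : ℝ) : ℝ := 2 - (max t (1 / 2))⁻¹

lemma continuous_aa : Continuous aa := by
  unfold aa
  refine continuous_id.div (by fun_prop) fun x => ?_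
  have := le_max_right (1 - x) (1 / 2); positivity

lemma continuous_bb : Continuous bb := by
  unfold bb
  refine continuous_const.sub (Continuous.inv₀ (by fun_prop) fun x => ?_)
  have := le_max_right x (1 / 2); positivity

lemma aa_le {t : ℝ} (h : t ≤ 1 / 2) : aa t = t / (1 - t) := by
  rw [aa, max_eq_left (by linarith)]

lemma aa_ge {t : ℝ} (h : 1 / 2 ≤ t) : aa t = 2 * t := by
  rw [aa, max_eq_right (by linarith)]; ring

lemma bb_le {t : ℝ} (h : t ≤ 1 / 2) : bb t = 0 := by
  rw [bb, max_eq_right h]; norm_num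

lemma bb_ge {t : ℝ} (h : 1 / 2 ≤ t) : bb t = 2 - t⁻¹ := by
  rw [bb, max_eq_left h]

lemma aa_le_one {t : ℝ} (h : t ≤ 1 / 2) : aa t ≤ 1 := by
  rw [aa_le h, div_le_one (by linarith)]; linarith

lemma aa_nonpos {t : ℝ} (h : t ≤ 0) : aa t ≤ 0 := by
  rw [aa_le (by linarith)]
  exact div_nonpos_of_nonpos_of_nonneg h (by linarith)

lemma bb_nonneg {t : ℝ} : 0 ≤ bb t := by
  rcases le_total t (1 / 2) with h | h
  · rw [bb_le h]
  · rw [bb_ge h]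
    have : t⁻¹ ≤ (1 / 2)⁻¹ := by gcongr
    norm_num at this ⊢
    linarith

lemma bb_le_one {t : ℝ} (h : t ≤ 1) : bb t ≤ 1 := by
  rcases le_total t (1 / 2) with h' | h'
  · rw [bb_le h']; norm_num
  · rw [bb_ge h']
    have : 1 ≤ t⁻¹ := (one_le_inv₀ (by linarith)).2 h
    linarith

lemma bb_le_half {t : ℝ} (h : t ≤ 2 / 3) : bb t ≤ 1 / 2 := by
  rcases le_total t (1 / 2) with h' | h'
  · rw [bb_le h']; norm_num
  · rw [bb_ge h']
    have : (2 / 3)⁻¹ ≤ t⁻¹ := by gcongr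
    norm_num at this ⊢
    linarith

lemma half_lt_bb {t : ℝ} (h : 2 / 3 < t) : 1 / 2 < bb t := by
  rw [bb_ge (by linarith)]
  have : t⁻¹ < (2 / 3)⁻¹ := by gcongr
  norm_num at this ⊢
  linarith

/-- `tauFun` in polar form. -/
lemma tauFun_eq [ProperSpace W] (F : MapE G W OnePoint.infty) (p : OnePoint W) :
    tauFun F.1 p = if rad p ≤ 1 / 2 then R (aa (rad p)) p else F.1 (R (bb (rad p)) p) := by
  induction p using OnePoint.rec with
  | infty =>
    rw [rad_infty, if_neg (by norm_num), bb_ge (by norm_num), R_one (by norm_num), mapE_infty F]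
    rfl
  | coe w =>
    change (if ‖w‖ < 1 then OnePoint.some ((1 - ‖w‖)⁻¹ • w)
      else F.1 (OnePoint.some ((1 - ‖w‖⁻¹) • w))) = _
    have hpos : 0 < 1 + ‖w‖ := by positivity
    rcases eq_or_ne w 0 with rfl | hw
    · rw [rad_zero, if_pos (by norm_num), aa_le (by norm_num), R_zero (by norm_num)]
      simp
    have hw' : 0 < ‖w‖ := by simpa using hw
    rcases lt_trichotomy ‖w‖ 1 with h | h | h
    · have hle : rad (OnePoint.some w) ≤ 1 / 2 := by
        rw [rad_some, div_le_div_iff₀ hpos (by norm_num)]; linarith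
      have haa : aa (rad (OnePoint.some w)) = ‖w‖ := by
        rw [aa_le hle, rad_some_eq]; field_simp; ring
      rw [if_pos h, if_pos hle, haa, R_some hw' h hw]
      congr 2
      field_simp
    · have hr : rad (OnePoint.some w) = 1 / 2 := by rw [rad_some, h]; norm_num
      rw [if_neg (by linarith), hr, if_pos le_rfl, aa_ge le_rfl, R_one (by norm_num), h]
      simp only [inv_one, sub_self, zero_smul]
      exact mapE_zero F
    · have hle : 1 / 2 < rad (OnePoint.some w) := by
        rw [rad_some, div_lt_div_iff₀ (by norm_num) hpos]; linarith
      have hbb : bb (rad (OnePoint.some w)) = 1 - ‖w‖⁻¹ := by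
        rw [bb_ge hle.le, rad_some]; field_simp; ring
      have hi : ‖w‖⁻¹ < 1 := inv_lt_one_of_one_lt₀ h
      have hi' : 0 < ‖w‖⁻¹ := by positivity
      rw [if_neg (by linarith), if_neg (by linarith), hbb,
        R_some (by linarith) (by linarith) hw]
      congr 3
      field_simp
      ring

/-- `τ` is continuous and a homotopy equivalence. -/
lemma tau_equiv [ProperSpace W] (hG : Good G W) :
    ∃ T : C(MapE G W OnePoint.infty, MapE G W (OnePoint.some 0)),
      (∀ F p, (T F).1 p = tauFun F.1 p) ∧
      ∃ T₁ : C(MapE G W (OnePoint.some 0), MapE G W OnePoint.infty),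
        ContinuousMap.Homotopic (T.comp T₁) (ContinuousMap.id _) ∧
        ContinuousMap.Homotopic (T₁.comp T) (ContinuousMap.id _) := by
  have caa := continuous_aa
  have cbb := continuous_bb
  have hb1 : bb 1 = 1 := by rw [bb_ge (by norm_num)]; norm_num
  have ha1 : aa 1 = 2 := by rw [aa_ge (by norm_num)]; norm_num
  have ha0 : aa 0 = 0 := by rw [aa_le (by norm_num)]; norm_num
  have hb0 : bb 0 = 0 := bb_le (by norm_num)
  obtain ⟨H, hH⟩ := conc hG (P := Unit) OnePoint.infty (OnePoint.some 0) (1 / 2) (by norm_num)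
    (by norm_num) (fun _ => aa) (fun _ => bb) (by fun_prop) (by fun_prop)
    (fun _ => Or.inl ⟨ha0.le, rfl⟩)
    (fun _ => Or.inr ⟨by rw [aa_ge le_rfl]; norm_num, rfl⟩)
    (fun _ => Or.inr (by rw [ha1]; norm_num)) (fun _ => hb0.le)
    (fun _ => (bb_le le_rfl).le) (fun _ => hb1.ge)
  obtain ⟨H₁, hH₁⟩ := conc hG (P := Unit) (OnePoint.some 0) OnePoint.infty (1 / 2) (by norm_num)
    (by norm_num) (fun _ x => 1 - 2 * x) (fun _ x => 2 * x - 1) (by fun_prop) (by fun_prop)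
    (fun _ => Or.inr ⟨by norm_num, rfl⟩)
    (fun _ => Or.inl ⟨by norm_num, rfl⟩)
    (fun _ => Or.inl (by norm_num)) (fun _ => by norm_num)
    (fun _ => by norm_num) (fun _ => by norm_num)
  let T := H.comp ((ContinuousMap.const _ ()).prodMk (ContinuousMap.id _))
  let T₁ := H₁.comp ((ContinuousMap.const _ ()).prodMk (ContinuousMap.id _))
  have hT : ∀ F p, (T F).1 p = if rad p ≤ 1 / 2 then R (aa (rad p)) p
    else F.1 (R (bb (rad p)) p) := fun F p => hH () F p
  have hT₁ : ∀ F p, (T₁ F).1 p = if rad p ≤ 1 / 2 then R (1 - 2 * (rad p)) p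
    else F.1 (R (2 * rad p - 1) p) := fun F p => hH₁ () F p
  refine ⟨T, fun F p => by rw [hT, tauFun_eq], T₁, ?_, ?_⟩
  · refine homotopic_id hG 0 _ (Or.inl ⟨le_rfl, rfl⟩) (2 / 3) (by norm_num)
      (by norm_num) (fun t => min (aa t) (1 - 2 * bb t)) (fun t => 2 * bb t - 1)
      (by fun_prop) (by fun_prop)
      (Or.inl ⟨(min_le_left _ _).trans ha0.le, rfl⟩)
      (Or.inl ⟨(min_le_right _ _).trans ?_, rfl⟩)
      (Or.inl ⟨(min_le_right _ _).trans ?_, rfl⟩) ?_ ?_ _ ?_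
    · rw [bb_ge (by norm_num)]; norm_num
    · rw [hb1]; norm_num
    · intro x hx
      have := bb_le_half hx
      linarith
    · simp only [hb1]; norm_num
    · intro F p
      rw [ContinuousMap.comp_apply, hT]
      by_cases h : rad p ≤ 1 / 2
      · rw [if_pos h, if_pos (by linarith), bb_le h, min_eq_left]
        have := aa_le_one h
        linarith
      push Not at h
      have hb : rad (R (bb (rad p)) p) = bb (rad p) := by
        refine rad_R bb_nonneg (bb_le_one (rad_le_one p)) ?_
        rcases deg_cases p with (rfl | rfl) | hp
        · exact Or.inr (Or.inl (by rw [rad_infty, hb1]))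
        · exact Or.inl (by rw [rad_zero, hb0])
        · exact Or.inr (Or.inr hp)
      have hRR : ∀ s, (bb (rad p) = 0 → s ≤ 0 ∨ 1 ≤ s) → (bb (rad p) = 1 → s ≤ 0 ∨ 1 ≤ s) →
          R s (R (bb (rad p)) p) = R s p := by
        intro s hs hs'
        apply R_R
        rcases (bb_nonneg (t := rad p)).eq_or_lt with h0 | h0
        · exact Or.inr (hs h0.symm)
        rcases (bb_le_one (rad_le_one p)).eq_or_lt with h1 | h1
        · exact Or.inr (hs' h1)
        exact Or.inl ⟨h0, h1⟩
      rw [if_neg (by linarith), hT₁, hb]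
      by_cases h' : rad p ≤ 2 / 3
      · have h2 := bb_le_half h'
        rw [if_pos h2, if_pos h', min_eq_right]
        · apply hRR
          · intro h3; rw [h3]; norm_num
          · intro h3; rw [h3]; norm_num
        · rw [aa_ge h.le]
          have := bb_nonneg (t := rad p)
          linarith
      · push Not at h'
        have h2 := half_lt_bb h'
        rw [if_neg (by linarith), if_neg (by linarith), hRR]
        · intro h3; rw [h3]; norm_num
        · intro h3; rw [h3]; norm_num
  · refine homotopic_id hG 1 _ (Or.inr ⟨le_rfl, rfl⟩) (3 / 4) (by norm_num)
      (by norm_num) (fun t => max (1 - 2 * t) (aa (2 * t - 1))) (fun t => bb (2 * t - 1))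
      (by fun_prop) (by fun_prop)
      (Or.inr ⟨le_trans (by norm_num) (le_max_left _ _), rfl⟩)
      (Or.inr ⟨le_trans ?_ (le_max_right _ _), rfl⟩)
      (Or.inr ⟨le_trans ?_ (le_max_right _ _), rfl⟩) ?_ ?_ _ ?_
    · rw [aa_ge (by norm_num)]; norm_num
    · rw [aa_ge (by norm_num)]; norm_num
    · intro x hx
      exact (bb_le (by linarith)).le
    · norm_num [hb1]
    · intro F p
      rw [ContinuousMap.comp_apply, hT₁]
      by_cases h : rad p ≤ 1 / 2
      · rw [if_pos h, if_pos (by linarith), max_eq_left]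
        have := aa_nonpos (t := 2 * rad p - 1) (by linarith)
        linarith
      push Not at h
      have hle := rad_le_one p
      have hb : rad (R (2 * rad p - 1) p) = 2 * rad p - 1 := by
        refine rad_R (by linarith) (by linarith) ?_
        rcases deg_cases p with (rfl | rfl) | hp
        · exact Or.inr (Or.inl (by rw [rad_infty]; norm_num))
        · rw [rad_zero] at h; norm_num at h
        · exact Or.inr (Or.inr hp)
      have hRR : ∀ s, (rad p = 1 → s ≤ 0 ∨ 1 ≤ s) →
          R s (R (2 * rad p - 1) p) = R s p := by
        intro s hs'
        apply R_R
        rcases hle.eq_or_lt with h1 | h1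
        · exact Or.inr (hs' h1)
        exact Or.inl ⟨by linarith, by linarith⟩
      rw [if_neg (by linarith), hT, hb]
      by_cases h' : rad p ≤ 3 / 4
      · rw [if_pos (by linarith), if_pos h', max_eq_right, hRR]
        · intro h3; rw [h3] at h'; norm_num at h'
        · have : 0 ≤ aa (2 * rad p - 1) := by
            rw [aa_le (by linarith)]
            exact div_nonneg (by linarith) (by linarith)
          linarith
      · push Not at h'
        rw [if_neg (by linarith), if_neg (by linarith), hRR]
        intro h3; rw [h3]; norm_num [hb1]

end mapping

end PaperAux

namespace PaperAux

open Filter Topology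

section smash

lemma continuous_of_infty {Q W X : Type*} [TopologicalSpace Q] [TopologicalSpace W] [R1Space W]
    [TopologicalSpace X] (h : Q → OnePoint W → X) (x0 : X)
    (h1 : Continuous fun x : Q × W => h x.1 (OnePoint.some x.2))
    (hinf : ∀ q, h q OnePoint.infty = x0)
    (h2 : ∀ q, Tendsto (fun x : Q × W => h x.1 (OnePoint.some x.2)) (𝓝 q ×ˢ cocompact W) (𝓝 x0)) :
    Continuous fun x : Q × OnePoint W => h x.1 x.2 := by
  rw [continuous_iff_continuousAt]
  rintro ⟨q, p⟩
  induction p using OnePoint.rec with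
  | infty =>
    unfold ContinuousAt
    simp only [hinf]
    rw [nhds_prod_eq, OnePoint.nhds_infty_eq, prod_sup, tendsto_sup, coclosedCompact_eq_cocompact]
    constructor
    · have : 𝓝 q ×ˢ map (OnePoint.some : W → OnePoint W) (cocompact W)
          = map (Prod.map id OnePoint.some) (𝓝 q ×ˢ cocompact W) := by
        rw [← prod_map_map_eq', map_id]
      rw [this, tendsto_map'_iff]
      exact h2 q
    · rw [prod_pure, tendsto_map'_iff]
      refine tendsto_const_nhds.congr fun q => ?_
      exact (hinf q).symm
  | coe w =>
    have he : IsOpenEmbedding (Prod.map id OnePoint.some : Q × W → Q × OnePoint W) :=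
      IsOpenEmbedding.id.prodMap OnePoint.isOpenEmbedding_coe
    have := he.continuousAt_iff (g := fun x : Q × OnePoint W => h x.1 x.2) (x := (q, w))
    exact this.1 h1.continuousAt

variable {U V : Type} [NormedAddCommGroup U] [NormedAddCommGroup V]

lemma continuous_of_infty_prod [ProperSpace U] [ProperSpace V]
    {Q X : Type*} [TopologicalSpace Q]
    [TopologicalSpace X] (h : Q → OnePoint (U × V) → X) (x0 : X)
    (h1 : Continuous fun x : Q × U × V => h x.1 (OnePoint.some x.2))
    (hinf : ∀ q, h q OnePoint.infty = x0)
    (hU : ∀ (q : Q) (l : Filter (Q × U × V)), Tendsto Prod.fst l (𝓝 q) →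
      Tendsto (fun x => ‖x.2.1‖) l atTop →
      Tendsto (fun x : Q × U × V => h x.1 (OnePoint.some x.2)) l (𝓝 x0))
    (hV : ∀ (q : Q) (l : Filter (Q × U × V)), Tendsto Prod.fst l (𝓝 q) →
      Tendsto (fun x => ‖x.2.2‖) l atTop →
      Tendsto (fun x : Q × U × V => h x.1 (OnePoint.some x.2)) l (𝓝 x0)) :
    Continuous fun x : Q × OnePoint (U × V) => h x.1 x.2 := by
  refine continuous_of_infty h x0 h1 hinf fun q => ?_
  rw [← coprod_cocompact, Filter.coprod, prod_sup, tendsto_sup]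
  constructor
  · refine hU q _ tendsto_fst ?_
    exact tendsto_norm_cocompact_atTop.comp (tendsto_comap.comp tendsto_snd)
  · refine hV q _ tendsto_fst ?_
    exact tendsto_norm_cocompact_atTop.comp (tendsto_comap.comp tendsto_snd)

/-- The canonical map `S^U × S^V → S^(U ⊕ V)`. -/
def sm (x : OnePoint U) (y : OnePoint V) : OnePoint (U × V) :=
  Option.elim x OnePoint.infty fun u => Option.elim y OnePoint.infty fun v => OnePoint.some (u, v)

lemma sm_infty_left (y : OnePoint V) : sm (OnePoint.infty : OnePoint U) y = OnePoint.infty := rfl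

lemma sm_infty_right (x : OnePoint U) : sm x (OnePoint.infty : OnePoint V) = OnePoint.infty := by
  induction x using OnePoint.rec <;> rfl

lemma sm_some (u : U) (v : V) : sm (OnePoint.some u) (OnePoint.some v) = OnePoint.some (u, v) := rfl

lemma rad_sm_left (x : OnePoint U) (y : OnePoint V) : rad x ≤ rad (sm x y) := by
  induction x using OnePoint.rec with
  | infty => rfl
  | coe u =>
    induction y using OnePoint.rec with
    | infty => exact rad_le_one _
    | coe v => exact rad_mono (norm_fst_le (u, v))

lemma rad_sm_right (x : OnePoint U) (y : OnePoint V) : rad y ≤ rad (sm x y) := by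
  induction x using OnePoint.rec with
  | infty => exact rad_le_one _
  | coe u =>
    induction y using OnePoint.rec with
    | infty => exact rad_le_one _
    | coe v => exact rad_mono (norm_snd_le (u, v))

lemma continuous_sm [ProperSpace U] [ProperSpace V] :
    Continuous fun x : OnePoint U × OnePoint V => sm x.1 x.2 := by
  rw [continuous_iff_continuousAt]
  rintro ⟨x, y⟩
  have cU := continuous_rad (W := U)
  have cV := continuous_rad (W := V)
  induction x using OnePoint.rec with
  | infty =>
    refine tendsto_infty_of_le (b := fun x => rad x.1) ?_
      (Eventually.of_forall fun x => rad_sm_left x.1 x.2)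
    exact (cU.comp continuous_fst).tendsto (OnePoint.infty, y)
  | coe u =>
    induction y using OnePoint.rec with
    | infty =>
      refine tendsto_infty_of_le (b := fun x => rad x.2) ?_
        (Eventually.of_forall fun x => rad_sm_right x.1 x.2)
      exact (cV.comp continuous_snd).tendsto (OnePoint.some u, OnePoint.infty)
    | coe v =>
      have he : IsOpenEmbedding (Prod.map OnePoint.some OnePoint.some :
          U × V → OnePoint U × OnePoint V) :=
        OnePoint.isOpenEmbedding_coe.prodMap OnePoint.isOpenEmbedding_coe
      refine (he.continuousAt_iff (g := fun x : OnePoint U × OnePoint V => sm x.1 x.2)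
        (x := (u, v))).1 ?_
      exact OnePoint.continuous_coe.continuousAt

lemma smashFun_some (f : OnePoint U → OnePoint U) (u : U) (v : V) :
    smashFun f (OnePoint.some (u, v)) = sm (f (OnePoint.some u)) (OnePoint.some v) := rfl

lemma smashFun_infty (f : OnePoint U → OnePoint U) :
    smashFun (V := V) f OnePoint.infty = OnePoint.infty := rfl

variable {G : Type} [Group G] [MulAction G U] [MulAction G V]

lemma act_sm (g : G) (x : OnePoint U) (y : OnePoint V) :
    sm (act g x) (act g y) = act g (sm x y) := by
  induction x using OnePoint.rec with
  | infty => rfl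
  | coe u =>
    induction y using OnePoint.rec with
    | infty => rfl
    | coe v => rfl

lemma tendsto_evalE [ProperSpace U] {p0 : OnePoint U} {ι : Type*} {l : Filter ι}
    {F : ι → MapE G U p0} {F0 : MapE G U p0} {p : ι → OnePoint U}
    (hF : Tendsto F l (𝓝 F0)) (hp : Tendsto p l (𝓝 OnePoint.infty)) :
    Tendsto (fun i => rad ((F i).1 (p i))) l (𝓝 1) := by
  have h1 := (continuous_rad.comp (continuous_evalE (G := G) p0)).tendsto (F0, OnePoint.infty)
  have h2 : Tendsto (fun i => (F i, p i)) l (𝓝 (F0, OnePoint.infty)) := hF.prodMk_nhds hp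
  have h3 := h1.comp h2
  simp only [Function.comp_apply, mapE_infty F0, rad_infty] at h3
  exact h3

lemma tendsto_some_infty [ProperSpace U] {ι : Type*} {l : Filter ι} {b : ι → ℝ} {w : ι → U}
    (hb : Tendsto b l atTop) (h : ∀ᶠ i in l, b i ≤ ‖w i‖) :
    Tendsto (fun i => OnePoint.some (w i)) l (𝓝 OnePoint.infty) := by
  apply tendsto_infty
  simp only [rad_some_eq]
  exact tendsto_one_sub_inv.comp (tendsto_atTop_mono' l h hb)

lemma smash_map [ProperSpace U] [ProperSpace V] (hz : ∀ g : G, g • (0 : U) = 0)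
    (p0 : OnePoint U) (p1 : OnePoint (U × V)) (hp : sm p0 (OnePoint.some (0 : V)) = p1) :
    ∃ S : C(MapE G U p0, MapE G (U × V) p1), ∀ F p, (S F).1 p = smashFun F.1 p := by
  refine lift (G := G) p1 (fun (F : MapE G U p0) p => smashFun F.1 p) ?_ ?_ ?_ ?_
  · refine continuous_of_infty_prod (fun (F : MapE G U p0) p => smashFun F.1 p) OnePoint.infty
      ?_ (fun F => rfl) ?_ ?_
    · have h : Continuous fun x : MapE G U p0 × U × V =>
          (x.1.1 (OnePoint.some x.2.1), (OnePoint.some x.2.2 : OnePoint V)) :=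
        ((continuous_evalE p0).comp (continuous_fst.prodMk
          (OnePoint.continuous_coe.comp (continuous_fst.comp continuous_snd)))).prodMk
          (OnePoint.continuous_coe.comp (continuous_snd.comp continuous_snd))
      exact continuous_sm.comp h
    · intro F0 l hF hu
      exact tendsto_infty_of_le (tendsto_evalE hF (tendsto_some_infty hu
        (Eventually.of_forall fun _ => le_rfl)))
        (Eventually.of_forall fun x =>
          rad_sm_left (x.1.1 (OnePoint.some x.2.1)) (OnePoint.some x.2.2))
    · intro F0 l hF hv
      refine tendsto_infty_of_le (tendsto_one_sub_inv.comp hv)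
        (Eventually.of_forall fun x => ?_)
      have := rad_sm_right (x.1.1 (OnePoint.some x.2.1)) (OnePoint.some x.2.2)
      rw [rad_some_eq] at this
      exact this
  · intro F g p
    induction p using OnePoint.rec with
    | infty => rfl
    | coe w =>
      obtain ⟨u, v⟩ := w
      change sm (F.1 (act g (OnePoint.some u))) (act g (OnePoint.some v)) =
        act g (sm (F.1 (OnePoint.some u)) (OnePoint.some v))
      rw [← act_sm, F.2.1]
  · intro F
    change sm (F.1 (OnePoint.some 0)) (OnePoint.some 0) = p1
    rw [mapE_zero F, hp]
  · intro F
    rfl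

variable [NormedSpace ℝ U] [NormedSpace ℝ V]

/-- The cut-off radius in the square homotopy. -/
def rho (s : ℝ) (w : U × V) : ℝ := max ‖w.1‖ (s * ‖w.2‖)

/-- Inner part of the square homotopy. -/
def innerPt (s : ℝ) (w : U × V) : OnePoint (U × V) :=
  OnePoint.some ((1 - rho s w)⁻¹ • w.1, (1 - s * ‖w‖)⁻¹ • w.2)

/-- Outer part of the square homotopy. -/
def outerPt (f : OnePoint U → OnePoint U) (s : ℝ) (w : U × V) : OnePoint (U × V) :=
  sm (f (OnePoint.some ((1 - (rho s w)⁻¹) • w.1))) (OnePoint.some ((1 - s * (rho s w)⁻¹) • w.2))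

/-- The square homotopy. -/
def sq (f : OnePoint U → OnePoint U) (s : ℝ) (p : OnePoint (U × V)) : OnePoint (U × V) :=
  Option.elim p OnePoint.infty fun w =>
    if 1 ≤ rho s w then outerPt f s w else innerPt s w

lemma rho_nonneg (s : ℝ) (w : U × V) : 0 ≤ rho s w := le_max_of_le_left (norm_nonneg _)

lemma smul_norm_le {s : ℝ} (h0 : 0 ≤ s) (h1 : s ≤ 1) (w : U × V) : s * ‖w‖ ≤ rho s w := by
  rw [Prod.norm_def, mul_max_of_nonneg _ _ h0]
  refine max_le_max ?_ le_rfl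
  have := norm_nonneg w.1
  nlinarith

lemma rad_inner {s : ℝ} (h0 : 0 ≤ s) (h1 : s ≤ 1) {w : U × V} (h : rho s w < 1) :
    rho s w ≤ rad (innerPt s w) := by
  have hm := smul_norm_le h0 h1 w
  have hr : 0 < 1 - rho s w := by linarith
  have hm' : 0 < 1 - s * ‖w‖ := by linarith
  set x : U × V := ((1 - rho s w)⁻¹ • w.1, (1 - s * ‖w‖)⁻¹ • w.2) with hx
  have h1' : ‖x.1‖ = (1 - rho s w)⁻¹ * ‖w.1‖ := by
    rw [hx, norm_smul, Real.norm_of_nonneg (by positivity)]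
  have h2' : ‖x.2‖ = (1 - s * ‖w‖)⁻¹ * ‖w.2‖ := by
    rw [hx, norm_smul, Real.norm_of_nonneg (by positivity)]
  have key : rho s w ≤ (1 - rho s w) * ‖x‖ := by
    rcases le_total ‖w.1‖ (s * ‖w.2‖) with hc | hc
    · have e : rho s w = s * ‖w.2‖ := max_eq_right hc
      have h3 : (1 - rho s w)⁻¹ ≤ (1 - s * ‖w‖)⁻¹ := by
        apply inv_anti₀ hm'
        rw [e]
        have := norm_snd_le w
        have : s * ‖w.2‖ ≤ s * ‖w‖ := by gcongr
        linarith
      have h4 : (1 - rho s w)⁻¹ * ‖w.2‖ ≤ ‖x‖ := by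
        refine le_trans ?_ (norm_snd_le x)
        rw [h2']; gcongr
      have h5 : ‖w.2‖ ≤ (1 - rho s w) * ‖x‖ := by
        have := mul_le_mul_of_nonneg_left h4 hr.le
        rwa [mul_inv_cancel_left₀ hr.ne'] at this
      refine le_trans ?_ h5
      rw [e]
      have := norm_nonneg w.2
      nlinarith
    · have e : rho s w = ‖w.1‖ := max_eq_left hc
      have h4 : (1 - rho s w)⁻¹ * ‖w.1‖ ≤ ‖x‖ := by
        rw [← h1']; exact norm_fst_le x
      have := mul_le_mul_of_nonneg_left h4 hr.le
      rw [mul_inv_cancel_left₀ hr.ne'] at this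
      exact e.le.trans this
  change rho s w ≤ ‖x‖ / (1 + ‖x‖)
  rw [le_div_iff₀ (by positivity)]
  linarith

lemma continuous_rho {Q : Type*} [TopologicalSpace Q] {s : Q → ℝ} (hs : Continuous s) :
    Continuous fun x : Q × U × V => rho (s x.1) x.2 := by
  unfold rho
  fun_prop

lemma continuous_inner [ProperSpace U] [ProperSpace V] :
    Continuous fun x : unitInterval × U × V =>
      if rho x.1.1 x.2 < 1 then innerPt x.1.1 x.2 else OnePoint.infty := by
  have hrho : Continuous fun x : unitInterval × U × V => rho x.1.1 x.2 :=
    continuous_rho continuous_subtype_val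
  rw [continuous_iff_continuousAt]
  intro x
  by_cases h : rho x.1.1 x.2 < 1
  · have hev : ∀ᶠ y : unitInterval × U × V in 𝓝 x, rho y.1.1 y.2 < 1 :=
      (isOpen_lt hrho continuous_const).mem_nhds h
    have hm := smul_norm_le x.1.2.1 x.1.2.2 x.2
    have hc : ContinuousAt (fun x : unitInterval × U × V => innerPt x.1.1 x.2) x := by
      refine OnePoint.continuous_coe.continuousAt.comp ?_
      refine ContinuousAt.prodMk ?_ ?_
      · refine ContinuousAt.smul (ContinuousAt.inv₀ ?_ (by linarith)) (by fun_prop)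
        exact (continuous_const.sub hrho).continuousAt
      · refine ContinuousAt.smul (ContinuousAt.inv₀ ?_ (by linarith)) (by fun_prop)
        fun_prop
    refine hc.congr ?_
    filter_upwards [hev] with y hy
    rw [if_pos hy]
  · unfold ContinuousAt
    simp only [if_neg h]
    push Not at h
    refine tendsto_infty_of_le (b := fun x => min 1 (rho x.1.1 x.2)) ?_
      (Eventually.of_forall fun y => ?_)
    · have := (continuous_const.min hrho : Continuous fun x : unitInterval × U × V =>
        min 1 (rho x.1.1 x.2)).tendsto x
      rwa [min_eq_left h] at this
    · split_ifs with hy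
      · exact (min_le_right _ _).trans (rad_inner y.1.2.1 y.1.2.2 hy)
      · exact min_le_left _ _

lemma continuous_sq_fin [ProperSpace U] [ProperSpace V] :
    Continuous fun x : (unitInterval × MapE G U OnePoint.infty) × U × V =>
      sq x.1.2.1 x.1.1.1 (OnePoint.some x.2) := by
  have hrho : Continuous fun x : (unitInterval × MapE G U OnePoint.infty) × U × V =>
      rho x.1.1.1 x.2 := continuous_rho (continuous_subtype_val.comp continuous_fst)
  have hinv : Continuous fun x : (unitInterval × MapE G U OnePoint.infty) × U × V =>
      (max 1 (rho x.1.1.1 x.2))⁻¹ := by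
    refine Continuous.inv₀ (continuous_const.max hrho) fun x => ?_
    have := le_max_left 1 (rho x.1.1.1 x.2)
    positivity
  have hs : Continuous fun x : (unitInterval × MapE G U OnePoint.infty) × U × V => x.1.1.1 :=
    continuous_subtype_val.comp (continuous_fst.comp continuous_fst)
  have hF : Continuous fun x : (unitInterval × MapE G U OnePoint.infty) × U × V => x.1.2 :=
    continuous_snd.comp continuous_fst
  have hu : Continuous fun x : (unitInterval × MapE G U OnePoint.infty) × U × V => x.2.1 :=
    continuous_fst.comp continuous_snd
  have hv : Continuous fun x : (unitInterval × MapE G U OnePoint.infty) × U × V => x.2.2 :=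
    continuous_snd.comp continuous_snd
  have hout : Continuous fun x : (unitInterval × MapE G U OnePoint.infty) × U × V =>
      sm (x.1.2.1 (OnePoint.some ((1 - (max 1 (rho x.1.1.1 x.2))⁻¹) • x.2.1)))
        (OnePoint.some ((1 - x.1.1.1 * (max 1 (rho x.1.1.1 x.2))⁻¹) • x.2.2)) := by
    refine continuous_sm.comp (Continuous.prodMk ?_ ?_)
    · exact (continuous_evalE (G := G) OnePoint.infty).comp (hF.prodMk
        (OnePoint.continuous_coe.comp ((continuous_const.sub hinv).smul hu)))
    · exact OnePoint.continuous_coe.comp ((continuous_const.sub (hs.mul hinv)).smul hv)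
  have hin : Continuous fun x : (unitInterval × MapE G U OnePoint.infty) × U × V =>
      if rho x.1.1.1 x.2 < 1 then innerPt x.1.1.1 x.2 else OnePoint.infty :=
    (continuous_inner (U := U) (V := V)).comp
      ((continuous_fst.comp continuous_fst).prodMk continuous_snd)
  have := Continuous.if_le hout hin (continuous_const (y := (1 : ℝ))) hrho ?_
  · refine this.congr fun x => ?_
    change _ = if 1 ≤ rho x.1.1.1 x.2 then outerPt x.1.2.1 x.1.1.1 x.2 else innerPt x.1.1.1 x.2
    split_ifs with h1 h2
    · rw [max_eq_right h1]; rfl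
    · rfl
    · exact absurd (not_le.1 h1) h2
  · intro x hx
    rw [← hx]
    simp only [max_self, inv_one, sub_self, zero_smul, lt_irrefl, if_false]
    rw [mapE_zero x.1.2]
    rfl

lemma continuous_sq [ProperSpace U] [ProperSpace V] :
    Continuous fun x : (unitInterval × MapE G U OnePoint.infty) × OnePoint (U × V) =>
      sq x.1.2.1 x.1.1.1 x.2 := by
  refine continuous_of_infty_prod (fun (q : unitInterval × MapE G U OnePoint.infty) p =>
    sq q.2.1 q.1.1 p) OnePoint.infty continuous_sq_fin (fun q => rfl) ?_ ?_
  · intro q l hq hu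
    have hw : Tendsto (fun x : (unitInterval × MapE G U OnePoint.infty) × U × V =>
        (OnePoint.some ((1 - (rho x.1.1.1 x.2)⁻¹) • x.2.1) : OnePoint U)) l
        (𝓝 OnePoint.infty) := by
      refine tendsto_some_infty (b := fun x => ‖x.2.1‖ - 1)
        (tendsto_atTop_add_const_right _ _ hu) ?_
      filter_upwards [hu.eventually_ge_atTop 1] with x hx
      have h1 : ‖x.2.1‖ ≤ rho x.1.1.1 x.2 := le_max_left _ _
      have h2 : (rho x.1.1.1 x.2)⁻¹ ≤ 1 := inv_le_one_of_one_le₀ (hx.trans h1)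
      have h3 : (rho x.1.1.1 x.2)⁻¹ * ‖x.2.1‖ ≤ 1 := by
        rw [inv_mul_le_iff₀ (by linarith)]; linarith
      rw [norm_smul, Real.norm_of_nonneg (by linarith)]
      linarith
    have hF : Tendsto (fun x : (unitInterval × MapE G U OnePoint.infty) × U × V => x.1.2) l
      (𝓝 q.2) := (continuous_snd.tendsto q).comp hq
    refine tendsto_infty_of_le (tendsto_evalE hF hw) ?_
    filter_upwards [hu.eventually_ge_atTop 1] with x hx
    have h1 : ‖x.2.1‖ ≤ rho x.1.1.1 x.2 := le_max_left _ _
    change _ ≤ rad (if 1 ≤ rho x.1.1.1 x.2 then outerPt x.1.2.1 x.1.1.1 x.2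
      else innerPt x.1.1.1 x.2)
    rw [if_pos (hx.trans h1)]
    exact rad_sm_left _ _
  · intro q l hq hv
    refine tendsto_infty_of_le (b := fun x => 1 - (1 + (‖x.2.2‖ - 1))⁻¹)
      (tendsto_one_sub_inv.comp (tendsto_atTop_add_const_right _ (-1) hv)) ?_
    filter_upwards [hv.eventually_ge_atTop 1] with x hx
    have s0 := x.1.1.2.1
    have s1 := x.1.1.2.2
    have hn : 0 < 1 + (‖x.2.2‖ - 1) := by linarith
    change _ ≤ rad (if 1 ≤ rho x.1.1.1 x.2 then outerPt x.1.2.1 x.1.1.1 x.2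
      else innerPt x.1.1.1 x.2)
    split_ifs with h
    · refine le_trans ?_ (rad_sm_right _ _)
      rw [rad_some_eq]
      have h1 : x.1.1.1 * ‖x.2.2‖ ≤ rho x.1.1.1 x.2 := le_max_right _ _
      have h2 : (rho x.1.1.1 x.2)⁻¹ ≤ 1 := inv_le_one_of_one_le₀ h
      have h4 : 0 ≤ (rho x.1.1.1 x.2)⁻¹ := inv_nonneg.2 (rho_nonneg _ _)
      have h3 : (rho x.1.1.1 x.2)⁻¹ * (x.1.1.1 * ‖x.2.2‖) ≤ 1 := by
        rw [inv_mul_le_iff₀ (by linarith)]; linarith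
      have h5 : ‖x.2.2‖ - 1 ≤ ‖(1 - x.1.1.1 * (rho x.1.1.1 x.2)⁻¹) • x.2.2‖ := by
        rw [norm_smul, Real.norm_of_nonneg (by nlinarith)]
        linarith
      gcongr
    · push Not at h
      rw [innerPt, rad_some_eq]
      have hm := smul_norm_le s0 s1 x.2
      have h5 : ‖x.2.2‖ - 1 ≤
          ‖((1 - rho x.1.1.1 x.2)⁻¹ • x.2.1, (1 - x.1.1.1 * ‖x.2‖)⁻¹ • x.2.2)‖ := by
        refine le_trans ?_ (norm_snd_le _)
        have hp : 0 ≤ x.1.1.1 * ‖x.2‖ := mul_nonneg s0 (norm_nonneg _)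
        have h6 : 1 ≤ (1 - x.1.1.1 * ‖x.2‖)⁻¹ := (one_le_inv₀ (by linarith)).2 (by linarith)
        rw [norm_smul, Real.norm_of_nonneg (by linarith)]
        nlinarith
      gcongr

lemma Good.prod (hU : Good G U) (hV : Good G V) : Good G (U × V) where
  smul g c w := Prod.ext (hU.smul g c w.1) (hV.smul g c w.2)
  norm g w := by
    rw [Prod.norm_def, Prod.norm_def]
    simp [hU.norm, hV.norm]

lemma sq_map [ProperSpace U] [ProperSpace V] (hU : Good G U) (hV : Good G V) :
    ∃ S : C(unitInterval × MapE G U OnePoint.infty, MapE G (U × V) (OnePoint.some 0)),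
      ∀ q p, (S q).1 p = sq q.2.1 q.1.1 p := by
  refine lift (G := G) _ (fun (q : unitInterval × MapE G U OnePoint.infty) p =>
    sq q.2.1 q.1.1 p) continuous_sq ?_ ?_ ?_
  · rintro ⟨s, F⟩ g p
    induction p using OnePoint.rec with
    | infty => rfl
    | coe w =>
      have hr : rho s.1 (g • w) = rho s.1 w := by simp [rho, hU.norm, hV.norm]
      change (if 1 ≤ rho s.1 (g • w) then outerPt F.1 s.1 (g • w) else innerPt s.1 (g • w)) =
        act g (if 1 ≤ rho s.1 w then outerPt F.1 s.1 w else innerPt s.1 w)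
      rw [hr]
      split_ifs
      · rw [outerPt, outerPt, hr, ← act_sm, act, ← F.2.1]
        simp only [Prod.smul_fst, Prod.smul_snd, OnePoint.map_some, act, hU.smul, hV.smul]
      · rw [innerPt, innerPt, hr, (hU.prod hV).norm]
        simp only [Prod.smul_fst, Prod.smul_snd, OnePoint.map_some, act, hU.smul, hV.smul,
          Prod.smul_mk]
  · rintro ⟨s, F⟩
    have hr : rho s.1 (0 : U × V) = 0 := by simp [rho]
    change (if 1 ≤ rho s.1 (0 : U × V) then outerPt F.1 s.1 0 else innerPt s.1 0) = _
    rw [hr, if_neg (by norm_num), innerPt]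
    simp
  · rintro ⟨s, F⟩
    rfl

lemma sq_zero (f : OnePoint U → OnePoint U) (p : OnePoint (U × V)) :
    sq f 0 p = smashFun (tauFun f) p := by
  induction p using OnePoint.rec with
  | infty => rfl
  | coe w =>
    obtain ⟨u, v⟩ := w
    have hr : rho 0 (u, v) = ‖u‖ := by simp [rho]
    rw [smashFun_some]
    change (if 1 ≤ rho 0 (u, v) then outerPt f 0 (u, v) else innerPt 0 (u, v)) =
      sm (if ‖u‖ < 1 then OnePoint.some ((1 - ‖u‖)⁻¹ • u)
        else f (OnePoint.some ((1 - ‖u‖⁻¹) • u))) _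
    rw [hr]
    by_cases h : ‖u‖ < 1
    · rw [if_pos h, if_neg h.not_ge, innerPt, hr, sm_some]
      simp
    · rw [if_neg h, if_pos (not_lt.1 h), outerPt, hr]
      simp

lemma sq_one (f : OnePoint U → OnePoint U) (p : OnePoint (U × V)) :
    sq f 1 p = tauFun (smashFun f) p := by
  induction p using OnePoint.rec with
  | infty => rfl
  | coe w =>
    have hr : rho 1 w = ‖w‖ := by simp [rho, Prod.norm_def]
    change (if 1 ≤ rho 1 w then outerPt f 1 w else innerPt 1 w) =
      (if ‖w‖ < 1 then OnePoint.some ((1 - ‖w‖)⁻¹ • w)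
        else smashFun f (OnePoint.some ((1 - ‖w‖⁻¹) • w)))
    rw [hr]
    by_cases h : ‖w‖ < 1
    · rw [if_pos h, if_neg h.not_ge, innerPt, hr, one_mul]
      rfl
    · rw [if_neg h, if_pos (not_lt.1 h), outerPt, hr, one_mul]
      rfl

end smash

end PaperAux

/-- Let `U`, `V` be orthogonal representations of a finite group `G`.
The square comparing `τ` (pinch-concatenation with the identity) with smashing by `S^V`
commutes up to homotopy, as maps `map^G(S^U,S^U; π_B^A) → map^G(S^{U+V},S^{U+V}; id_B)`,
and the horizontal maps `τ` are homotopy equivalences. -/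
theorem tau_commutes_with_smash_up_to_homotopy
    (G : Type) [Group G] [Finite G]
    (U V : Type) [NormedAddCommGroup U] [InnerProductSpace ℝ U] [FiniteDimensional ℝ U]
    [NormedAddCommGroup V] [InnerProductSpace ℝ V] [FiniteDimensional ℝ V]
    [MulAction G U] [MulAction G V]
    (hlinU : ∀ g : G, IsLinearMap ℝ (fun u : U => g • u))
    (hisoU : ∀ (g : G) (u : U), ‖g • u‖ = ‖u‖)
    (hlinV : ∀ g : G, IsLinearMap ℝ (fun v : V => g • v))
    (hisoV : ∀ (g : G) (v : V), ‖g • v‖ = ‖v‖) :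
    ∃ (T : C(MapPi G U, MapId G U)) (T' : C(MapPi G (U × V), MapId G (U × V)))
      (SV : C(MapPi G U, MapPi G (U × V))) (SV' : C(MapId G U, MapId G (U × V))),
      (∀ F p, ((T F).1 : OnePoint U → OnePoint U) p = tauFun (F.1 : C(_,_)) p) ∧
      (∀ F p, ((T' F).1 : OnePoint (U × V) → OnePoint (U × V)) p = tauFun (F.1 : C(_,_)) p) ∧
      (∀ F p, ((SV F).1 : OnePoint (U × V) → OnePoint (U × V)) p = smashFun (F.1 : C(_,_)) p) ∧
      (∀ F p, ((SV' F).1 : OnePoint (U × V) → OnePoint (U × V)) p = smashFun (F.1 : C(_,_)) p) ∧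
      -- the square commutes up to homotopy
      Nonempty ((SV'.comp T).Homotopy (T'.comp SV)) ∧
      -- the horizontal maps are homotopy equivalences
      (∃ T₁ : C(MapId G U, MapPi G U),
        Nonempty ((T.comp T₁).Homotopy (ContinuousMap.id _)) ∧
        Nonempty ((T₁.comp T).Homotopy (ContinuousMap.id _))) ∧
      (∃ T₂ : C(MapId G (U × V), MapPi G (U × V)),
        Nonempty ((T'.comp T₂).Homotopy (ContinuousMap.id _)) ∧
        Nonempty ((T₂.comp T').Homotopy (ContinuousMap.id _))) := by
  have hU : PaperAux.Good G U := ⟨fun g c w => (hlinU g).map_smul c w, hisoU⟩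
  have hV : PaperAux.Good G V := ⟨fun g c w => (hlinV g).map_smul c w, hisoV⟩
  have hUV := hU.prod hV
  obtain ⟨T, hT, T₁, hT1, hT2⟩ := PaperAux.tau_equiv hU
  obtain ⟨T', hT', T₂, hT1', hT2'⟩ := PaperAux.tau_equiv hUV
  obtain ⟨SV, hSV⟩ := PaperAux.smash_map (V := V) hU.zero OnePoint.infty OnePoint.infty
    (PaperAux.sm_infty_left _)
  obtain ⟨SV', hSV'⟩ := PaperAux.smash_map (V := V) hU.zero (OnePoint.some 0)
    (OnePoint.some 0) (PaperAux.sm_some _ _)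
  obtain ⟨S, hS⟩ := PaperAux.sq_map hU hV
  have hsq : (SV'.comp T).Homotopic (T'.comp SV) := by
    refine ⟨⟨S, ?_, ?_⟩⟩
    · intro F
      apply PaperAux.MapE.ext'
      intro p
      change (S (0, F)).1 p = (SV' (T F)).1 p
      rw [hS, hSV', show ((T F).1 : OnePoint U → OnePoint U) = tauFun F.1 from funext (hT F)]
      exact PaperAux.sq_zero _ _
    · intro F
      apply PaperAux.MapE.ext'
      intro p
      change (S (1, F)).1 p = (T' (SV F)).1 p
      rw [hS, hT', show ((SV F).1 : OnePoint (U × V) → OnePoint (U × V)) = smashFun F.1 from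
        funext (hSV F)]
      exact PaperAux.sq_one _ _
  exact ⟨T, T', SV, SV', hT, hT', hSV, hSV', hsq, ⟨T₁, hT1, hT2⟩, ⟨T₂, hT1', hT2'⟩⟩
end
end
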